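/- arXiv:1309.5712 — 4 statements merged into one kernel-verified Lean document; each statement's English description precedes it below -/
import Mathlib

section
/- Let A be a finite set of integers with |A| = k > 2. If |A+A| = 2k-1+b with 2k-1+b ≤ 3k-4, then A is contained in an arithmetic progression of length k+b ≤ 2k-3. -/
open Pointwise

/-- Pigeonhole modulo the length. -/
lemma card_short (A : Finset ℤ) (lo hi : ℤ) (hlo : lo ∈ A) (hhi : hi ∈ A)
    (hb : ∀ a ∈ A, lo ≤ a ∧ a ≤ hi) (hlt : lo < hi) (hn : hi - lo ≤ 2 * (A.card : ℤ) - 3) :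
    (A.card : ℤ) + (hi - lo) ≤ (A + A).card := by
  classical
  have key : ∀ w, lo ≤ w → w ≤ hi → w ∉ A → lo + w ∈ A + A ∨ hi + w ∈ A + A := by
    intro w h1 h2 hw
    by_contra! hcon
    obtain ⟨hc1, hc2⟩ := hcon
    let r : ℤ → ℤ := fun a => if a ≤ w then lo + w - a else hi + w - a
    have hinj : Set.InjOn r (A.erase hi : Finset ℤ) := by
      intro x hx y hy hxy
      simp only [Finset.coe_erase, Set.mem_sdiff, Finset.mem_coe, Set.mem_singleton_iff] at hx hy
      have := hb x hx.1
      have := hb y hy.1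
      have := hx.2
      have := hy.2
      simp only [r] at hxy
      split_ifs at hxy <;> omega
    have hdisj : Disjoint A ((A.erase hi).image r) := by
      rw [Finset.disjoint_left]
      intro z hz hz'
      obtain ⟨a, ha, rfl⟩ := Finset.mem_image.1 hz'
      have ha' := Finset.mem_of_mem_erase ha
      simp only [r] at hz
      split_ifs at hz with h
      · apply hc1
        have := Finset.add_mem_add ha' hz
        convert this using 1; ring
      · apply hc2
        have := Finset.add_mem_add ha' hz
        convert this using 1; ring
    have hsub : A ∪ (A.erase hi).image r ⊆ Finset.Icc lo hi := by
      intro z hz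
      rw [Finset.mem_Icc]
      rcases Finset.mem_union.1 hz with hz | hz
      · exact hb z hz
      · obtain ⟨a, ha, rfl⟩ := Finset.mem_image.1 hz
        have ha' := hb a (Finset.mem_of_mem_erase ha)
        simp only [r]
        split_ifs <;> omega
    have := Finset.card_le_card hsub
    rw [Finset.card_union_of_disjoint hdisj, Finset.card_image_of_injOn hinj,
      Finset.card_erase_of_mem hhi, Int.card_Icc] at this
    have : 0 < A.card := Finset.card_pos.2 ⟨_, hlo⟩
    omega
  let e : ℤ → ℤ := fun w => if lo + w ∈ A + A then lo + w else hi + w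
  let W := Finset.Icc lo hi \ A
  have hWm : ∀ w ∈ W, lo ≤ w ∧ w ≤ hi ∧ w ∉ A ∧ w ≠ lo ∧ w ≠ hi := by
    intro w hw
    simp only [W, Finset.mem_sdiff, Finset.mem_Icc] at hw
    refine ⟨hw.1.1, hw.1.2, hw.2, ?_, ?_⟩
    · rintro rfl; exact hw.2 hlo
    · rintro rfl; exact hw.2 hhi
  have heW : ∀ w, e w = lo + w ∨ e w = hi + w := by
    intro w; simp only [e]; split_ifs <;> simp
  have hinj : Set.InjOn e W := by
    intro x hx y hy hxy
    have := hWm x hx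
    have := hWm y hy
    rcases heW x with h | h <;> rcases heW y with h' | h' <;> omega
  let X := A.image (fun a => lo + a)
  let Y := (A.erase lo).image (fun a => hi + a)
  have hX : X.card = A.card := Finset.card_image_of_injective _ (add_right_injective lo)
  have hY : Y.card = A.card - 1 := by
    rw [Finset.card_image_of_injective _ (add_right_injective hi), Finset.card_erase_of_mem hlo]
  have hXY : Disjoint X Y := by
    rw [Finset.disjoint_left]
    intro z hz hz'
    obtain ⟨a, ha, rfl⟩ := Finset.mem_image.1 hz
    obtain ⟨a', ha', h⟩ := Finset.mem_image.1 hz'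
    have := hb a ha
    have := hb a' (Finset.mem_of_mem_erase ha')
    have := Finset.ne_of_mem_erase ha'
    omega
  have hXYW : Disjoint (X ∪ Y) (W.image e) := by
    rw [Finset.disjoint_left]
    intro z hz hz'
    obtain ⟨w, hw, rfl⟩ := Finset.mem_image.1 hz'
    have hw' := hWm w hw
    rcases Finset.mem_union.1 hz with hz | hz
    · obtain ⟨a, ha, h⟩ := Finset.mem_image.1 hz
      have := hb a ha
      have : a ≠ w := by rintro rfl; exact hw'.2.2.1 ha
      rcases heW w with h' | h' <;> omega
    · obtain ⟨a, ha, h⟩ := Finset.mem_image.1 hz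
      have := Finset.ne_of_mem_erase ha
      have ha := Finset.mem_of_mem_erase ha
      have := hb a ha
      have : a ≠ w := by rintro rfl; exact hw'.2.2.1 ha
      rcases heW w with h' | h' <;> omega
  have hsub : X ∪ Y ∪ W.image e ⊆ A + A := by
    intro z hz
    simp only [Finset.mem_union, X, Y, Finset.mem_image] at hz
    rcases hz with (⟨a, ha, rfl⟩ | ⟨a, ha, rfl⟩) | ⟨w, hw, rfl⟩
    · exact Finset.add_mem_add hlo ha
    · exact Finset.add_mem_add hhi (Finset.mem_of_mem_erase ha)
    · have hw' := hWm w hw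
      simp only [e]
      split_ifs with h
      · exact h
      · exact (key w hw'.1 hw'.2.1 hw'.2.2.1).resolve_left h
  have hWc : W.card = (hi + 1 - lo).toNat - A.card := by
    rw [Finset.card_sdiff_of_subset, Int.card_Icc]
    intro a ha
    exact Finset.mem_Icc.2 (hb a ha)
  have hAc : A.card ≤ (hi + 1 - lo).toNat := by
    rw [← Int.card_Icc]
    exact Finset.card_le_card fun a ha => Finset.mem_Icc.2 (hb a ha)
  have := Finset.card_le_card hsub
  rw [Finset.card_union_of_disjoint hXYW, Finset.card_union_of_disjoint hXY,
    Finset.card_image_of_injOn hinj, hX, hY, hWc] at this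
  have : 0 < A.card := Finset.card_pos.2 ⟨_, hlo⟩
  omega

/-- If every initial segment is dense, the sumset contains a long interval. -/
lemma dense_interval (L : Finset ℤ) (lo : ℤ) (hlo : lo ∈ L) (hb : ∀ a ∈ L, lo ≤ a)
    (hd : ∀ x ∈ L, x ≠ lo → x - lo < 2 * ((L.filter (· ≤ x)).card : ℤ) - 2) (s : ℤ)
    (hs0 : 0 ≤ s) (hs : s ≤ 2 * (L.card : ℤ) - 2) : 2 * lo + s ∈ L + L := by
  classical
  set F := L.filter (· ≤ lo + s) with hF
  have hcount : s + 1 < 2 * (F.card : ℤ) := by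
    by_contra! hcon
    have hne : (L.filter (fun x => lo + s < x)).Nonempty := by
      rw [Finset.nonempty_iff_ne_empty]
      intro h0
      have : F = L := by
        rw [hF, Finset.filter_eq_self]
        intro a ha
        by_contra! h
        have : a ∈ L.filter (fun x => lo + s < x) := Finset.mem_filter.2 ⟨ha, h⟩
        rw [h0] at this
        simp at this
      rw [this] at hcon
      omega
    obtain ⟨y, hy, hmin⟩ := Finset.exists_min_image _ id hne
    rw [Finset.mem_filter] at hy
    have h1 : L.filter (· ≤ y) = insert y F := by
      ext z
      simp only [hF, Finset.mem_filter, Finset.mem_insert]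
      constructor
      · rintro ⟨hz, hzy⟩
        by_cases h : z ≤ lo + s
        · exact Or.inr ⟨hz, h⟩
        · have := hmin z (Finset.mem_filter.2 ⟨hz, by omega⟩)
          simp only [id] at this
          left; omega
      · rintro (rfl | h)
        · exact ⟨hy.1, le_rfl⟩
        · exact ⟨h.1, by omega⟩
    have h2 : y ∉ F := by
      simp only [hF, Finset.mem_filter]; omega
    have := hd y hy.1 (by omega)
    rw [h1, Finset.card_insert_of_notMem h2] at this
    push_cast at this
    omega
  by_contra hcon
  have hinj : Function.Injective (fun a : ℤ => 2 * lo + s - a) := by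
    intro a b h; simp only at h; omega
  have hdisj : Disjoint F (F.image (fun a => 2 * lo + s - a)) := by
    rw [Finset.disjoint_left]
    intro z hz hz'
    obtain ⟨a, ha, rfl⟩ := Finset.mem_image.1 hz'
    apply hcon
    have := Finset.add_mem_add (Finset.mem_of_mem_filter _ ha) (Finset.mem_of_mem_filter _ hz)
    convert this using 1; ring
  have hsub : F ∪ F.image (fun a => 2 * lo + s - a) ⊆ Finset.Icc lo (lo + s) := by
    intro z hz
    rw [Finset.mem_Icc]
    rcases Finset.mem_union.1 hz with hz | hz
    · rw [hF, Finset.mem_filter] at hz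
      exact ⟨hb z hz.1, hz.2⟩
    · obtain ⟨a, ha, rfl⟩ := Finset.mem_image.1 hz
      rw [hF, Finset.mem_filter] at ha
      have := hb a ha.1
      omega
  have := Finset.card_le_card hsub
  rw [Finset.card_union_of_disjoint hdisj, Finset.card_image_of_injective _ hinj,
    Int.card_Icc] at this
  omega

lemma dense_interval' (M : Finset ℤ) (hi : ℤ) (hhi : hi ∈ M) (hb : ∀ a ∈ M, a ≤ hi)
    (hd : ∀ x ∈ M, x ≠ hi → hi - x < 2 * ((M.filter (x ≤ ·)).card : ℤ) - 2) (s : ℤ)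
    (hs0 : 0 ≤ s) (hs : s ≤ 2 * (M.card : ℤ) - 2) : 2 * hi - s ∈ M + M := by
  classical
  have h := dense_interval (-M) (-hi) (by simpa using hhi)
    (fun a ha => by have := hb (-a) (by simpa using ha); omega)
    (fun x hx hne => by
      have h1 := hd (-x) (by simpa using hx) (by omega)
      have h2 : (-M).filter (· ≤ x) = -(M.filter (-x ≤ ·)) := by
        ext z
        simp only [Finset.mem_filter, Finset.mem_neg']
        constructor <;> rintro ⟨h, h'⟩ <;> exact ⟨h, by omega⟩
      rw [h2, Finset.card_neg]
      omega) s hs0 (by rw [Finset.card_neg]; exact hs)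
  have h3 : -(2 * -hi + s) ∈ M + M := by
    obtain ⟨a, ha, b, hb, hab⟩ := Finset.mem_add.1 h
    rw [← hab, neg_add]
    exact Finset.add_mem_add (by simpa using ha) (by simpa using hb)
  convert h3 using 1; ring

lemma cd (A B : Finset ℤ) (hA : A.Nonempty) (hB : B.Nonempty) :
    A.card + B.card - 1 ≤ (A + B).card :=
  cauchy_davenport_add_of_linearOrder_isCancelAdd hA hB

lemma card_split (A : Finset ℤ) (c : ℤ) (hc : c ∈ A) :
    (A.filter (· ≤ c)).card + (A.filter (c ≤ ·)).card = A.card + 1 := by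
  classical
  have h1 : A.filter (· ≤ c) ∪ A.filter (c ≤ ·) = A := by
    ext z
    simp only [Finset.mem_union, Finset.mem_filter]
    constructor
    · tauto
    · intro h
      rcases le_total z c with h' | h' <;> tauto
  have h2 : A.filter (· ≤ c) ∩ A.filter (c ≤ ·) = {c} := by
    ext z
    simp only [Finset.mem_inter, Finset.mem_filter, Finset.mem_singleton]
    constructor
    · rintro ⟨⟨_, h⟩, _, h'⟩; omega
    · rintro rfl; simp [hc]
  rw [← Finset.card_union_add_card_inter, h1, h2, Finset.card_singleton]

lemma case_one (A : Finset ℤ) (lo hi : ℤ) (hlo : lo ∈ A) (hhi : hi ∈ A)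
    (hb : ∀ a ∈ A, lo ≤ a ∧ a ≤ hi) (hlt : lo < hi) (hn : 2 * (A.card : ℤ) - 2 ≤ hi - lo)
    (hd : ∀ c ∈ A, lo < c → c < hi → c - lo < 2 * ((A.filter (· ≤ c)).card : ℤ) - 2 ∨
      hi - c < 2 * ((A.filter (c ≤ ·)).card : ℤ) - 2) :
    3 * (A.card : ℤ) - 3 ≤ (A + A).card := by
  classical
  let ld : ℤ → Prop := fun x => x = lo ∨ x - lo < 2 * ((A.filter (· ≤ x)).card : ℤ) - 2
  set L := A.filter ld with hL
  set M := A.filter (fun x => ¬ ld x) with hM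
  have hAhi : A.filter (· ≤ hi) = A := by
    rw [Finset.filter_eq_self]; exact fun a ha => (hb a ha).2
  have hAlo : A.filter (lo ≤ ·) = A := by
    rw [Finset.filter_eq_self]; exact fun a ha => (hb a ha).1
  have hLlo : lo ∈ L := Finset.mem_filter.2 ⟨hlo, Or.inl rfl⟩
  have hMhi : hi ∈ M := by
    refine Finset.mem_filter.2 ⟨hhi, ?_⟩
    simp only [ld, hAhi]
    omega
  have hdown : ∀ x ∈ M, ∀ y ∈ L, y < x := by
    intro x hx y hy
    by_contra! hxy
    have hne : (L.filter (x ≤ ·)).Nonempty := ⟨y, Finset.mem_filter.2 ⟨hy, hxy⟩⟩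
    obtain ⟨y, hy, hmin⟩ := Finset.exists_min_image _ id hne
    obtain ⟨hyL, hxy⟩ := Finset.mem_filter.1 hy
    obtain ⟨hyA, hyl⟩ := Finset.mem_filter.1 hyL
    obtain ⟨hxA, hxl⟩ := Finset.mem_filter.1 hx
    have hxy' : x < y := by
      rcases lt_or_eq_of_le hxy with h | h
      · exact h
      · subst h; exact absurd hyl hxl
    have hne2 : (A.filter (· < y)).Nonempty := ⟨x, Finset.mem_filter.2 ⟨hxA, hxy'⟩⟩
    obtain ⟨x', hx', hmax⟩ := Finset.exists_max_image _ id hne2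
    obtain ⟨hx'A, hx'y⟩ := Finset.mem_filter.1 hx'
    have hxx' : x ≤ x' := hmax x (Finset.mem_filter.2 ⟨hxA, hxy'⟩)
    have hx'l : ¬ ld x' := by
      intro h
      have : y ≤ x' := hmin x' (Finset.mem_filter.2 ⟨Finset.mem_filter.2 ⟨hx'A, h⟩, hxx'⟩)
      omega
    have hcard : A.filter (· ≤ y) = insert y (A.filter (· ≤ x')) := by
      ext z
      simp only [Finset.mem_filter, Finset.mem_insert]
      constructor
      · rintro ⟨hz, hzy⟩
        by_cases h : z = y
        · exact Or.inl h
        · exact Or.inr ⟨hz, hmax z (Finset.mem_filter.2 ⟨hz, by omega⟩)⟩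
      · rintro (rfl | h)
        · exact ⟨hyA, le_rfl⟩
        · exact ⟨h.1, by omega⟩
    have hni : y ∉ A.filter (· ≤ x') := by
      simp only [Finset.mem_filter]; omega
    have hy2 := hb y hyA
    have hx2 := hb x' hx'A
    simp only [ld, not_or] at hx'l hyl
    rw [hcard, Finset.card_insert_of_notMem hni] at hyl
    push_cast at hyl
    have h1 := hd x' hx'A (by omega) (by omega)
    have := card_split A x' hx'A
    omega
  have hLM : L.card + M.card = A.card := Finset.card_filter_add_card_filter_not _
  have hLf : ∀ x ∈ L, L.filter (· ≤ x) = A.filter (· ≤ x) := by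
    intro x hx
    ext z
    simp only [Finset.mem_filter, hL]
    constructor
    · rintro ⟨⟨h, _⟩, h'⟩; exact ⟨h, h'⟩
    · rintro ⟨h, h'⟩
      refine ⟨⟨h, ?_⟩, h'⟩
      by_contra hz
      have := hdown z (Finset.mem_filter.2 ⟨h, hz⟩) x hx
      omega
  have hMf : ∀ x ∈ M, M.filter (x ≤ ·) = A.filter (x ≤ ·) := by
    intro x hx
    ext z
    simp only [Finset.mem_filter, hM]
    constructor
    · rintro ⟨⟨h, _⟩, h'⟩; exact ⟨h, h'⟩
    · rintro ⟨h, h'⟩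
      refine ⟨⟨h, ?_⟩, h'⟩
      intro hz
      have := hdown x hx z (Finset.mem_filter.2 ⟨h, hz⟩)
      omega
  have hLint := dense_interval L lo hLlo (fun a ha => (hb a (Finset.mem_of_mem_filter _ ha)).1)
    (fun x hx hne => by
      rw [hLf x hx]
      rcases (Finset.mem_filter.1 hx).2 with h | h
      · exact absurd h hne
      · exact h)
  have hMint := dense_interval' M hi hMhi (fun a ha => (hb a (Finset.mem_of_mem_filter _ ha)).2)
    (fun x hx hne => by
      rw [hMf x hx]
      obtain ⟨hxA, hxl⟩ := Finset.mem_filter.1 hx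
      have := hb x hxA
      simp only [ld, not_or] at hxl
      exact (hd x hxA (by omega) (by omega)).resolve_left hxl.2)
  have hyM : ∀ y ∈ M, 2 * (L.card : ℤ) ≤ y - lo := by
    intro y hy
    obtain ⟨hyA, hyl⟩ := Finset.mem_filter.1 hy
    simp only [ld, not_or] at hyl
    have hsub : insert y L ⊆ A.filter (· ≤ y) := by
      intro z hz
      rcases Finset.mem_insert.1 hz with rfl | hz
      · exact Finset.mem_filter.2 ⟨hyA, le_rfl⟩
      · exact Finset.mem_filter.2 ⟨Finset.mem_of_mem_filter _ hz, (hdown y hy z hz).le⟩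
    have := Finset.card_le_card hsub
    rw [Finset.card_insert_of_notMem (fun h => lt_irrefl _ (hdown y hy y h))] at this
    omega
  have hxL : ∀ x ∈ L, 2 * (M.card : ℤ) ≤ hi - x := by
    intro x hx
    obtain ⟨hxA, hxl⟩ := Finset.mem_filter.1 hx
    have hsub : insert x M ⊆ A.filter (x ≤ ·) := by
      intro z hz
      rcases Finset.mem_insert.1 hz with rfl | hz
      · exact Finset.mem_filter.2 ⟨hxA, le_rfl⟩
      · exact Finset.mem_filter.2 ⟨Finset.mem_of_mem_filter _ hz, (hdown z hz x hx).le⟩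
    have := Finset.card_le_card hsub
    rw [Finset.card_insert_of_notMem (fun h => lt_irrefl _ (hdown x h x hx))] at this
    have := card_split A x hxA
    have : 0 < L.card := Finset.card_pos.2 ⟨_, hLlo⟩
    rcases hxl with rfl | h <;> omega
  have hLpos : 0 < L.card := Finset.card_pos.2 ⟨_, hLlo⟩
  have hMpos : 0 < M.card := Finset.card_pos.2 ⟨_, hMhi⟩
  let X := Finset.Icc (2 * lo) (2 * lo + (2 * (L.card : ℤ) - 2))
  let Y := Finset.Icc (2 * hi - (2 * (M.card : ℤ) - 2)) (2 * hi)
  have hcr : ∀ z ∈ L + M, 2 * lo + 2 * (L.card : ℤ) ≤ z ∧ z ≤ 2 * hi - 2 * (M.card : ℤ) := by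
    intro z hz
    obtain ⟨x, hx, y, hy, rfl⟩ := Finset.mem_add.1 hz
    have := hyM y hy
    have := hxL x hx
    have := hb x (Finset.mem_of_mem_filter _ hx)
    have := hb y (Finset.mem_of_mem_filter _ hy)
    constructor <;> omega
  have hd1 : Disjoint X (L + M) := by
    rw [Finset.disjoint_left]
    intro z hz hz'
    have := hcr z hz'
    simp only [X, Finset.mem_Icc] at hz
    omega
  have hd2 : Disjoint (X ∪ (L + M)) Y := by
    rw [Finset.disjoint_left]
    intro z hz hz'
    simp only [Y, Finset.mem_Icc] at hz'
    rcases Finset.mem_union.1 hz with hz | hz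
    · simp only [X, Finset.mem_Icc] at hz
      omega
    · have := hcr z hz
      omega
  have hLA : L ⊆ A := Finset.filter_subset _ _
  have hMA : M ⊆ A := Finset.filter_subset _ _
  have hsub : X ∪ (L + M) ∪ Y ⊆ A + A := by
    intro z hz
    rcases Finset.mem_union.1 hz with hz | hz
    · rcases Finset.mem_union.1 hz with hz | hz
      · simp only [X, Finset.mem_Icc] at hz
        have := hLint (z - 2 * lo) (by omega) (by omega)
        rw [add_sub_cancel] at this
        exact Finset.add_subset_add hLA hLA this
      · exact Finset.add_subset_add hLA hMA hz
    · simp only [Y, Finset.mem_Icc] at hz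
      have := hMint (2 * hi - z) (by omega) (by omega)
      rw [sub_sub_cancel] at this
      exact Finset.add_subset_add hMA hMA this
  have := Finset.card_le_card hsub
  rw [Finset.card_union_of_disjoint hd2, Finset.card_union_of_disjoint hd1, Int.card_Icc,
    Int.card_Icc] at this
  have := cd L M ⟨_, hLlo⟩ ⟨_, hMhi⟩
  omega

/-- Counting lemma for a split at `c` with a set `T` of new sums. -/
lemma split_count (A P Q T : Finset ℤ) (c : ℤ) (hP : P ⊆ A) (hQ : Q ⊆ A)
    (hPc : ∀ x ∈ P, x ≤ c) (hQc : ∀ x ∈ Q, c ≤ x) (hT : T ⊆ P + Q)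
    (hT1 : ∀ t ∈ T, t ∉ P + P) (hT2 : ∀ t ∈ T, t ∉ Q + Q) :
    (P + P).card + (Q + Q).card + T.card ≤ (A + A).card + 1 := by
  classical
  have h1 : (P + P) ∩ (Q + Q) ⊆ {2 * c} := by
    intro z hz
    obtain ⟨h1, h2⟩ := Finset.mem_inter.1 hz
    obtain ⟨a, ha, b, hb, h1⟩ := Finset.mem_add.1 h1
    obtain ⟨a', ha', b', hb', h2⟩ := Finset.mem_add.1 h2
    have := hPc a ha
    have := hPc b hb
    have := hQc a' ha'
    have := hQc b' hb'
    rw [Finset.mem_singleton]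
    omega
  have h1' := Finset.card_le_card h1
  rw [Finset.card_singleton] at h1'
  have h2 := Finset.card_union_add_card_inter (P + P) (Q + Q)
  have h3 : Disjoint ((P + P) ∪ (Q + Q)) T := by
    rw [Finset.disjoint_left]
    intro z hz hzT
    rcases Finset.mem_union.1 hz with h | h
    · exact hT1 z hzT h
    · exact hT2 z hzT h
  have h4 : (P + P) ∪ (Q + Q) ∪ T ⊆ A + A :=
    Finset.union_subset (Finset.union_subset (Finset.add_subset_add hP hP)
      (Finset.add_subset_add hQ hQ)) (hT.trans (Finset.add_subset_add hP hQ))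
  have h5 := Finset.card_le_card h4
  rw [Finset.card_union_of_disjoint h3] at h5
  omega

lemma new_left (P Q : Finset ℤ) (c g y : ℤ)
    (hPc : ∀ x ∈ P, x ≤ c) (hQc : ∀ x ∈ Q, c ≤ x) (hg : ∀ x ∈ P, g ∣ x - c)
    (hyg : ¬ g ∣ y - c) (hmin : ∀ z ∈ Q, ¬ g ∣ z - c → y ≤ z)
    (x : ℤ) (hx : x ∈ P) (hxc : x ≠ c) : x + y ∉ P + P ∧ x + y ∉ Q + Q := by
  have hxg := hg x hx
  have hx' := hPc x hx
  constructor
  · intro h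
    obtain ⟨p, hp, q, hq, h⟩ := Finset.mem_add.1 h
    apply hyg
    have : y - c = (p - c) + (q - c) - (x - c) := by linarith
    rw [this]
    exact dvd_sub (dvd_add (hg p hp) (hg q hq)) hxg
  · intro h
    obtain ⟨p, hp, q, hq, h⟩ := Finset.mem_add.1 h
    have := hQc p hp
    have := hQc q hq
    have hpg : g ∣ p - c := by
      by_contra h'
      have := hmin p hp h'
      omega
    have hqg : g ∣ q - c := by
      by_contra h'
      have := hmin q hq h'
      omega
    apply hyg
    have : y - c = (p - c) + (q - c) - (x - c) := by linarith
    rw [this]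
    exact dvd_sub (dvd_add hpg hqg) hxg

lemma new_right (P Q : Finset ℤ) (c g x : ℤ)
    (hPc : ∀ x ∈ P, x ≤ c) (hQc : ∀ x ∈ Q, c ≤ x) (hg : ∀ y ∈ Q, g ∣ y - c)
    (hxg : ¬ g ∣ x - c) (hmax : ∀ z ∈ P, ¬ g ∣ z - c → z ≤ x)
    (y : ℤ) (hy : y ∈ Q) (hyc : y ≠ c) : x + y ∉ P + P ∧ x + y ∉ Q + Q := by
  have hyg := hg y hy
  have hy' := hQc y hy
  constructor
  · intro h
    obtain ⟨p, hp, q, hq, h⟩ := Finset.mem_add.1 h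
    have := hPc p hp
    have := hPc q hq
    have hpg : g ∣ p - c := by
      by_contra h'
      have := hmax p hp h'
      omega
    have hqg : g ∣ q - c := by
      by_contra h'
      have := hmax q hq h'
      omega
    apply hxg
    have : x - c = (p - c) + (q - c) - (y - c) := by linarith
    rw [this]
    exact dvd_sub (dvd_add hpg hqg) hyg
  · intro h
    obtain ⟨p, hp, q, hq, h⟩ := Finset.mem_add.1 h
    apply hxg
    have : x - c = (p - c) + (q - c) - (y - c) := by linarith
    rw [this]
    exact dvd_sub (dvd_add (hg p hp) (hg q hq)) hyg

lemma exists_min_nd (Q : Finset ℤ) (g c : ℤ) (h : ∃ y ∈ Q, ¬ g ∣ y - c) :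
    ∃ y ∈ Q, ¬ g ∣ y - c ∧ ∀ z ∈ Q, ¬ g ∣ z - c → y ≤ z := by
  classical
  obtain ⟨y, hy, hyg⟩ := h
  obtain ⟨m, hm, hmin⟩ := Finset.exists_min_image (Q.filter (fun y => ¬ g ∣ y - c)) id
    ⟨y, Finset.mem_filter.2 ⟨hy, hyg⟩⟩
  obtain ⟨h1, h2⟩ := Finset.mem_filter.1 hm
  exact ⟨m, h1, h2, fun z hz hzg => hmin z (Finset.mem_filter.2 ⟨hz, hzg⟩)⟩

lemma exists_max_nd (Q : Finset ℤ) (g c : ℤ) (h : ∃ y ∈ Q, ¬ g ∣ y - c) :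
    ∃ y ∈ Q, ¬ g ∣ y - c ∧ ∀ z ∈ Q, ¬ g ∣ z - c → z ≤ y := by
  classical
  obtain ⟨y, hy, hyg⟩ := h
  obtain ⟨m, hm, hmin⟩ := Finset.exists_max_image (Q.filter (fun y => ¬ g ∣ y - c)) id
    ⟨y, Finset.mem_filter.2 ⟨hy, hyg⟩⟩
  obtain ⟨h1, h2⟩ := Finset.mem_filter.1 hm
  exact ⟨m, h1, h2, fun z hz hzg => hmin z (Finset.mem_filter.2 ⟨hz, hzg⟩)⟩

/-- Main inductive bound. -/
lemma main_bound : ∀ (k : ℕ) (A : Finset ℤ) (lo hi : ℤ), A.card = k → lo ∈ A → hi ∈ A →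
    (∀ a ∈ A, lo ≤ a ∧ a ≤ hi) → lo < hi → 2 * (A.card : ℤ) - 3 ≤ hi - lo →
    (∀ g : ℤ, 1 < g → ∃ a ∈ A, ∃ b ∈ A, ¬ g ∣ a - b) →
    3 * (A.card : ℤ) - 3 ≤ (A + A).card := by
  intro k
  induction k using Nat.strong_induction_on with
  | _ k ih =>
  intro A lo hi hk hlo hhi hb hlt hn hG
  classical
  by_cases hn' : hi - lo ≤ 2 * (A.card : ℤ) - 3
  · have := card_short A lo hi hlo hhi hb hlt hn'
    omega
  by_cases hd : ∀ c ∈ A, lo < c → c < hi → c - lo < 2 * ((A.filter (· ≤ c)).card : ℤ) - 2 ∨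
      hi - c < 2 * ((A.filter (c ≤ ·)).card : ℤ) - 2
  · exact case_one A lo hi hlo hhi hb hlt (by omega) hd
  push Not at hd
  obtain ⟨c, hc, hloc, hchi, hc1, hc2⟩ := hd
  have hsplit := card_split A c hc
  set P := A.filter (· ≤ c) with hPdef
  set Q := A.filter (c ≤ ·) with hQdef
  have hPA : P ⊆ A := Finset.filter_subset _ _
  have hQA : Q ⊆ A := Finset.filter_subset _ _
  have hPc : ∀ x ∈ P, x ≤ c := fun x hx => (Finset.mem_filter.1 hx).2
  have hQc : ∀ x ∈ Q, c ≤ x := fun x hx => (Finset.mem_filter.1 hx).2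
  have hcP : c ∈ P := Finset.mem_filter.2 ⟨hc, le_rfl⟩
  have hcQ : c ∈ Q := Finset.mem_filter.2 ⟨hc, le_rfl⟩
  have hloP : lo ∈ P := Finset.mem_filter.2 ⟨hlo, hloc.le⟩
  have hhiQ : hi ∈ Q := Finset.mem_filter.2 ⟨hhi, hchi.le⟩
  have hPQ : ∀ x ∈ A, x ∈ P ∨ x ∈ Q := by
    intro x hx
    rcases le_total x c with h | h
    · exact Or.inl (Finset.mem_filter.2 ⟨hx, h⟩)
    · exact Or.inr (Finset.mem_filter.2 ⟨hx, h⟩)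
  have hPk : P.card < k := by
    rw [← hk]
    exact Finset.card_lt_card (Finset.ssubset_iff_of_subset hPA |>.2
      ⟨hi, hhi, fun h => by have := hPc _ h; omega⟩)
  have hQk : Q.card < k := by
    rw [← hk]
    exact Finset.card_lt_card (Finset.ssubset_iff_of_subset hQA |>.2
      ⟨lo, hlo, fun h => by have := hQc _ h; omega⟩)
  have ihP : (∀ g : ℤ, 1 < g → ∃ a ∈ P, ∃ b ∈ P, ¬ g ∣ a - b) →
      3 * (P.card : ℤ) - 3 ≤ (P + P).card := fun h =>
    ih _ hPk P lo c rfl hloP hcP (fun a ha => ⟨(hb a (hPA ha)).1, hPc a ha⟩) hloc (by omega) h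
  have ihQ : (∀ g : ℤ, 1 < g → ∃ a ∈ Q, ∃ b ∈ Q, ¬ g ∣ a - b) →
      3 * (Q.card : ℤ) - 3 ≤ (Q + Q).card := fun h =>
    ih _ hQk Q c hi rfl hcQ hhiQ (fun a ha => ⟨hQc a ha, (hb a (hQA ha)).2⟩) hchi (by omega) h
  have hcdP := cd P P ⟨_, hcP⟩ ⟨_, hcP⟩
  have hcdQ := cd Q Q ⟨_, hcQ⟩ ⟨_, hcQ⟩
  -- every modulus fails on one of the sides
  have hnd : ∀ g : ℤ, 1 < g → (∃ x ∈ P, ¬ g ∣ x - c) ∨ (∃ y ∈ Q, ¬ g ∣ y - c) := by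
    intro g hg
    by_contra! hcon
    obtain ⟨a, ha, b, hb', hab⟩ := hG g hg
    have hall : ∀ x ∈ A, g ∣ x - c := fun x hx =>
      (hPQ x hx).elim (hcon.1 x) (hcon.2 x)
    apply hab
    have := dvd_sub (hall a ha) (hall b hb')
    rwa [sub_sub_sub_cancel_right] at this
  have hTl : ∀ y ∈ Q, ((P.erase c).image (fun x => x + y)) ⊆ P + Q := by
    intro y hy z hz
    obtain ⟨x, hx, rfl⟩ := Finset.mem_image.1 hz
    exact Finset.add_mem_add (Finset.mem_of_mem_erase hx) hy
  have hTr : ∀ x ∈ P, ((Q.erase c).image (fun y => x + y)) ⊆ P + Q := by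
    intro y hy z hz
    obtain ⟨x, hx, rfl⟩ := Finset.mem_image.1 hz
    exact Finset.add_mem_add hy (Finset.mem_of_mem_erase hx)
  have hTlc : ∀ y, ((P.erase c).image (fun x => x + y)).card = P.card - 1 := by
    intro y
    rw [Finset.card_image_of_injective _ (add_left_injective y), Finset.card_erase_of_mem hcP]
  have hTrc : ∀ x, ((Q.erase c).image (fun y => x + y)).card = Q.card - 1 := by
    intro y
    rw [Finset.card_image_of_injective _ (add_right_injective y), Finset.card_erase_of_mem hcQ]
  by_cases hgP : ∃ g : ℤ, 1 < g ∧ ∀ x ∈ P, g ∣ x - c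
  · obtain ⟨g, hg, hgP⟩ := hgP
    obtain ⟨y, hyQ, hyg, hymin⟩ := exists_min_nd Q g c ((hnd g hg).resolve_left (by
      rintro ⟨x, hx, h⟩; exact h (hgP x hx)))
    have hnewl := new_left P Q c g y hPc hQc hgP hyg hymin
    by_cases hgQ : ∃ g : ℤ, 1 < g ∧ ∀ x ∈ Q, g ∣ x - c
    · obtain ⟨g', hg', hgQ⟩ := hgQ
      obtain ⟨x, hxP, hxg, hxmax⟩ := exists_max_nd P g' c ((hnd g' hg').resolve_right (by
        rintro ⟨x, hx, h⟩; exact h (hgQ x hx)))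
      have hnewr := new_right P Q c g' x hPc hQc hgQ hxg hxmax
      set T1 := (P.erase c).image (fun x => x + y) with hT1
      set T2 := (Q.erase c).image (fun y => x + y) with hT2
      have hint : T1 ∩ T2 ⊆ {x + y} := by
        intro z hz
        obtain ⟨h1, h2⟩ := Finset.mem_inter.1 hz
        obtain ⟨x', hx', h1⟩ := Finset.mem_image.1 h1
        obtain ⟨y', hy', h2⟩ := Finset.mem_image.1 h2
        have hx'P := Finset.mem_of_mem_erase hx'
        have hy'Q := Finset.mem_of_mem_erase hy'
        have hyy : y ≤ y' := by
          apply hymin y' hy'Q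
          intro h
          apply hyg
          have : y - c = (y' - c) + (x - c) - (x' - c) := by linarith
          rw [this]
          exact dvd_sub (dvd_add h (hgP x hxP)) (hgP x' hx'P)
        have hxx : x' ≤ x := by
          apply hxmax x' hx'P
          intro h
          apply hxg
          have : x - c = (x' - c) + (y - c) - (y' - c) := by linarith
          rw [this]
          exact dvd_sub (dvd_add h (hgQ y hyQ)) (hgQ y' hy'Q)
        rw [Finset.mem_singleton]
        omega
      have hint' := Finset.card_le_card hint
      rw [Finset.card_singleton] at hint'
      have hun := Finset.card_union_add_card_inter T1 T2
      have hT1c : T1.card = P.card - 1 := hTlc y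
      have hT2c : T2.card = Q.card - 1 := hTrc x
      have hfin := split_count A P Q (T1 ∪ T2) c hPA hQA hPc hQc
        (Finset.union_subset (hTl y hyQ) (hTr x hxP))
        (by
          intro t ht
          rcases Finset.mem_union.1 ht with ht | ht
          · obtain ⟨x', hx', rfl⟩ := Finset.mem_image.1 ht
            exact (hnewl x' (Finset.mem_of_mem_erase hx') (Finset.ne_of_mem_erase hx')).1
          · obtain ⟨y', hy', rfl⟩ := Finset.mem_image.1 ht
            exact (hnewr y' (Finset.mem_of_mem_erase hy') (Finset.ne_of_mem_erase hy')).1)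
        (by
          intro t ht
          rcases Finset.mem_union.1 ht with ht | ht
          · obtain ⟨x', hx', rfl⟩ := Finset.mem_image.1 ht
            exact (hnewl x' (Finset.mem_of_mem_erase hx') (Finset.ne_of_mem_erase hx')).2
          · obtain ⟨y', hy', rfl⟩ := Finset.mem_image.1 ht
            exact (hnewr y' (Finset.mem_of_mem_erase hy') (Finset.ne_of_mem_erase hy')).2)
      omega
    · have hQb := ihQ (by
        intro g hg
        by_contra! hcon
        exact hgQ ⟨g, hg, fun x hx => hcon x hx c hcQ⟩)
      have hfin := split_count A P Q _ c hPA hQA hPc hQc (hTl y hyQ)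
        (by
          intro t ht
          obtain ⟨x', hx', rfl⟩ := Finset.mem_image.1 ht
          exact (hnewl x' (Finset.mem_of_mem_erase hx') (Finset.ne_of_mem_erase hx')).1)
        (by
          intro t ht
          obtain ⟨x', hx', rfl⟩ := Finset.mem_image.1 ht
          exact (hnewl x' (Finset.mem_of_mem_erase hx') (Finset.ne_of_mem_erase hx')).2)
      rw [hTlc y] at hfin
      omega
  have hPb := ihP (by
    intro g hg
    by_contra! hcon
    exact hgP ⟨g, hg, fun x hx => hcon x hx c hcP⟩)
  by_cases hgQ : ∃ g : ℤ, 1 < g ∧ ∀ x ∈ Q, g ∣ x - c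
  · obtain ⟨g', hg', hgQ⟩ := hgQ
    obtain ⟨x, hxP, hxg, hxmax⟩ := exists_max_nd P g' c ((hnd g' hg').resolve_right (by
      rintro ⟨x, hx, h⟩; exact h (hgQ x hx)))
    have hnewr := new_right P Q c g' x hPc hQc hgQ hxg hxmax
    have hfin := split_count A P Q _ c hPA hQA hPc hQc (hTr x hxP)
      (by
        intro t ht
        obtain ⟨x', hx', rfl⟩ := Finset.mem_image.1 ht
        exact (hnewr x' (Finset.mem_of_mem_erase hx') (Finset.ne_of_mem_erase hx')).1)
      (by
        intro t ht
        obtain ⟨x', hx', rfl⟩ := Finset.mem_image.1 ht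
        exact (hnewr x' (Finset.mem_of_mem_erase hx') (Finset.ne_of_mem_erase hx')).2)
    rw [hTrc x] at hfin
    omega
  have hQb := ihQ (by
    intro g hg
    by_contra! hcon
    exact hgQ ⟨g, hg, fun x hx => hcon x hx c hcQ⟩)
  by_cases hc1A : c + 1 ∈ A
  · -- overlapping split
    set P' := A.filter (· ≤ c + 1) with hP'
    have hP'e : P' = insert (c + 1) P := by
      ext z
      simp only [hP', hPdef, Finset.mem_filter, Finset.mem_insert]
      constructor
      · rintro ⟨h, h'⟩
        by_cases h2 : z = c + 1
        · exact Or.inl h2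
        · exact Or.inr ⟨h, by omega⟩
      · rintro (rfl | h)
        · exact ⟨hc1A, le_rfl⟩
        · exact ⟨h.1, by omega⟩
    have hP'c : P'.card = P.card + 1 := by
      rw [hP'e, Finset.card_insert_of_notMem]
      intro h; have := hPc _ h; omega
    have hQ2 : 2 ≤ Q.card := by
      have : ({c, hi} : Finset ℤ) ⊆ Q := by
        intro z hz
        rcases Finset.mem_insert.1 hz with rfl | hz
        · exact hcQ
        · rw [Finset.mem_singleton] at hz; rw [hz]; exact hhiQ
      have := Finset.card_le_card this
      rwa [Finset.card_pair (by omega)] at this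
    have hP'A : P' ⊆ A := Finset.filter_subset _ _
    have hP'k : P'.card < k := by
      rw [← hk]
      exact Finset.card_lt_card (Finset.ssubset_iff_of_subset hP'A |>.2
        ⟨hi, hhi, fun h => by have := (Finset.mem_filter.1 h).2; omega⟩)
    have hc1P : c + 1 ∈ P' := Finset.mem_filter.2 ⟨hc1A, le_rfl⟩
    have hcP' : c ∈ P' := Finset.mem_filter.2 ⟨hc, by omega⟩
    have hP'b := ih _ hP'k P' lo (c + 1) rfl (Finset.mem_filter.2 ⟨hlo, by omega⟩) hc1P
      (fun a ha => ⟨(hb a (hP'A ha)).1, (Finset.mem_filter.1 ha).2⟩) (by omega) (by omega)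
      (by
        intro g hg
        refine ⟨c + 1, hc1P, c, hcP', fun h => ?_⟩
        rw [add_sub_cancel_left] at h
        have := Int.le_of_dvd one_pos h
        omega)
    have hint : (P' + P') ∩ (Q + Q) ⊆ Finset.Icc (2 * c) (2 * c + 2) := by
      intro z hz
      obtain ⟨h1, h2⟩ := Finset.mem_inter.1 hz
      obtain ⟨a, ha, b, hb, h1⟩ := Finset.mem_add.1 h1
      obtain ⟨a', ha', b', hb', h2⟩ := Finset.mem_add.1 h2
      have := (Finset.mem_filter.1 ha).2
      have := (Finset.mem_filter.1 hb).2
      have := hQc a' ha'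
      have := hQc b' hb'
      rw [Finset.mem_Icc]
      omega
    have hint' := Finset.card_le_card hint
    rw [Int.card_Icc] at hint'
    have hun := Finset.card_union_add_card_inter (P' + P') (Q + Q)
    have := Finset.card_le_card (Finset.union_subset (Finset.add_subset_add hP'A hP'A)
      (Finset.add_subset_add hQA hQA))
    omega
  · -- one new sum
    obtain ⟨d, hd, hdmin⟩ := Finset.exists_min_image (Q.erase c) id
      ⟨hi, Finset.mem_erase.2 ⟨by omega, hhiQ⟩⟩
    have hdQ := Finset.mem_of_mem_erase hd
    have hdc := Finset.ne_of_mem_erase hd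
    have hdc' := hQc d hdQ
    have hd1 : d ≠ c + 1 := by rintro rfl; exact hc1A (hQA hdQ)
    obtain ⟨x, hxP, hxg, hxmax⟩ := exists_max_nd P (d - c) c (by
      by_contra! hcon
      exact hgP ⟨d - c, by omega, hcon⟩)
    have hxc := hPc x hxP
    have hxc' : x ≠ c := by rintro rfl; simp at hxg
    have hfin := split_count A P Q {x + d} c hPA hQA hPc hQc
      (Finset.singleton_subset_iff.2 (Finset.add_mem_add hxP hdQ))
      (by
        intro t ht h
        rw [Finset.mem_singleton] at ht
        subst ht
        obtain ⟨p, hp, q, hq, h⟩ := Finset.mem_add.1 h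
        have := hPc p hp
        have := hPc q hq
        have hpg : d - c ∣ p - c := by
          by_contra h'
          have := hxmax p hp h'
          omega
        have hqg : d - c ∣ q - c := by
          by_contra h'
          have := hxmax q hq h'
          omega
        apply hxg
        have : x - c = (p - c) + (q - c) - (d - c) := by linarith
        rw [this]
        exact dvd_sub (dvd_add hpg hqg) dvd_rfl)
      (by
        intro t ht h
        rw [Finset.mem_singleton] at ht
        subst ht
        obtain ⟨p, hp, q, hq, h⟩ := Finset.mem_add.1 h
        have hh : ∀ p ∈ Q, p = c ∨ d ≤ p := by
          intro p hp
          by_cases h : p = c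
          · exact Or.inl h
          · exact Or.inr (hdmin p (Finset.mem_erase.2 ⟨h, hp⟩))
        have hp' := hh p hp
        have hq' := hh q hq
        have : p = c ∧ q = c := by omega
        apply hxg
        have : x - c = -(d - c) := by omega
        rw [this]
        exact (dvd_neg).2 dvd_rfl)
    rw [Finset.card_singleton] at hfin
    omega

theorem freiman_3k4 (A : Finset ℤ) (k b : ℕ) (hk : A.card = k) (hk2 : 2 < k)
    (hsum : (A + A).card = 2 * k - 1 + b) (hb : 2 * k - 1 + b ≤ 3 * k - 4) :
    (∃ a d : ℤ, A ⊆ (Finset.range (k + b)).image (fun i : ℕ => a + d * (i : ℤ))) ∧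
      k + b ≤ 2 * k - 3 := by
  classical
  refine ⟨?_, by omega⟩
  have hne : A.Nonempty := Finset.card_pos.1 (by omega)
  obtain ⟨lo, hlo, hmin⟩ := Finset.exists_min_image A id hne
  simp only [id] at hmin
  set g := A.gcd (fun a => a - lo) with hg
  have hgdvd : ∀ a ∈ A, g ∣ a - lo := fun a ha => Finset.gcd_dvd ha
  obtain ⟨e, he, hel⟩ := Finset.exists_mem_ne (by omega : 1 < A.card) lo
  have hg0 : 0 < g := by
    have h1 : 0 ≤ g := by
      have h := Finset.normalize_gcd (s := A) (f := fun a => a - lo)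
      rw [← hg] at h
      rw [← h, ← Int.abs_eq_normalize]
      exact abs_nonneg g
    have h2 : g ≠ 0 := by
      intro h
      have := hgdvd e he
      rw [h, zero_dvd_iff] at this
      omega
    omega
  set B := A.image (fun a => (a - lo) / g) with hB
  have hmul : ∀ a ∈ A, a = lo + g * ((a - lo) / g) := by
    intro a ha
    rw [Int.mul_ediv_cancel' (hgdvd a ha)]; ring
  have hAB : A = B.image (fun x => lo + g * x) := by
    rw [hB, Finset.image_image]
    ext z
    rw [Finset.mem_image]
    constructor
    · intro hz; exact ⟨z, hz, (hmul z hz).symm⟩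
    · rintro ⟨a, ha, rfl⟩
      simp only [Function.comp]
      rw [← hmul a ha]; exact ha
  have hinj : Function.Injective (fun x : ℤ => lo + g * x) := by
    intro x y h
    simp only [add_right_inj] at h
    exact mul_left_cancel₀ hg0.ne' h
  have hBc : B.card = k := by
    rw [← hk, hAB, Finset.card_image_of_injective _ hinj]
  have hBs : (B + B).card = 2 * k - 1 + b := by
    rw [← hsum]
    have hinj2 : Function.Injective (fun x : ℤ => 2 * lo + g * x) := by
      intro x y h
      simp only [add_right_inj] at h
      exact mul_left_cancel₀ hg0.ne' h
    rw [← Finset.card_image_of_injective (B + B) hinj2]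
    congr 1
    ext z
    simp only [Finset.mem_image, Finset.mem_add]
    constructor
    · rintro ⟨_, ⟨x, hx, y, hy, rfl⟩, rfl⟩
      refine ⟨lo + g * x, ?_, lo + g * y, ?_, by ring⟩
      · rw [hAB]; exact Finset.mem_image_of_mem _ hx
      · rw [hAB]; exact Finset.mem_image_of_mem _ hy
    · rintro ⟨a, ha, c, hc, rfl⟩
      refine ⟨_, ⟨_, Finset.mem_image_of_mem _ ha, _, Finset.mem_image_of_mem _ hc, rfl⟩, ?_⟩
      have h1 := hmul a ha
      have h2 := hmul c hc
      rw [mul_add]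
      linarith
  have hB0 : (0 : ℤ) ∈ B := Finset.mem_image.2 ⟨lo, hlo, by simp⟩
  have hBnn : ∀ x ∈ B, 0 ≤ x := by
    intro x hx
    obtain ⟨a, ha, rfl⟩ := Finset.mem_image.1 hx
    have := hmin a ha
    exact Int.ediv_nonneg (by omega) hg0.le
  obtain ⟨n, hn, hmax⟩ := Finset.exists_max_image B id ⟨_, hB0⟩
  simp only [id] at hmax
  have hn0 : 0 < n := by
    obtain ⟨e, he, hel⟩ := Finset.exists_mem_ne (by omega : 1 < B.card) 0
    have := hBnn e he
    have := hmax e he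
    omega
  have hbd : ∀ a ∈ B, 0 ≤ a ∧ a ≤ n := fun a ha => ⟨hBnn a ha, hmax a ha⟩
  have hG : ∀ q : ℤ, 1 < q → ∃ a ∈ B, ∃ b ∈ B, ¬ q ∣ a - b := by
    intro q hq
    by_contra! hcon
    have h1 : g * q ∣ g := by
      conv_rhs => rw [hg]
      apply Finset.dvd_gcd
      intro a ha
      have h := hcon _ (Finset.mem_image_of_mem _ ha) 0 hB0
      rw [sub_zero] at h
      have h2 := mul_dvd_mul_left g h
      rwa [Int.mul_ediv_cancel' (hgdvd a ha)] at h2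
    have := Int.le_of_dvd hg0 h1
    nlinarith
  have hnk : n + 1 ≤ k + b := by
    by_cases h : 2 * (B.card : ℤ) - 3 ≤ n - 0
    · have := main_bound _ B 0 n rfl hB0 hn hbd hn0 h hG
      omega
    · have := card_short B 0 n hB0 hn hbd hn0 (by omega)
      omega
  refine ⟨lo, g, fun a ha => ?_⟩
  have hx := Finset.mem_image_of_mem (fun a => (a - lo) / g) ha
  have hx' := hbd _ hx
  rw [Finset.mem_image]
  refine ⟨((a - lo) / g).toNat, ?_, ?_⟩
  · rw [Finset.mem_range]; omega
  · rw [Int.toNat_of_nonneg hx'.1]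
    exact (hmul a ha).symm
end

section
/- Let A and B be finite nonempty subsets of an abelian group G with |A+B| < |A|+|B|. Then |A+B| = |A+H| + |B+H| - |H|, where H = {g ∈ G : g + (A+B) = A+B} is the stabilizer of A+B. -/
open Pointwise

namespace KneserAux

variable {G : Type*} [AddCommGroup G] [DecidableEq G]

/-- The stabilizer of a nonempty finite set, as a finset. -/
def st (C : Finset G) : Finset G := (C - C).filter (fun g => ∀ x ∈ C, g + x ∈ C)

lemma mem_st {C : Finset G} (hC : C.Nonempty) {g : G} :
    g ∈ st C ↔ ∀ x ∈ C, g + x ∈ C := by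
  unfold st
  rw [Finset.mem_filter]
  refine ⟨fun h => h.2, fun h => ⟨?_, h⟩⟩
  obtain ⟨x, hx⟩ := hC
  exact Finset.mem_sub.2 ⟨g + x, h x hx, x, hx, by abel⟩

lemma mem_st_iff {C : Finset G} (hC : C.Nonempty) {g : G} :
    g ∈ st C ↔ g ∈ AddAction.stabilizer G C := by
  rw [mem_st hC, AddAction.mem_stabilizer_finset']
  rfl

lemma card_st {C : Finset G} (hC : C.Nonempty) :
    (st C).card = Nat.card (AddAction.stabilizer G C) := by
  have : ((st C : Finset G) : Set G) = (AddAction.stabilizer G C : Set G) := by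
    ext g; simpa using mem_st_iff hC
  have h2 : Nat.card ((st C : Finset G) : Set G) = Nat.card (AddAction.stabilizer G C : Set G) := by
    rw [this]
  simpa using h2

lemma dvd_card (K : AddSubgroup G) (S : Finset G) (h : ∀ k ∈ K, ∀ s ∈ S, k + s ∈ S) :
    Nat.card K ∣ S.card := by
  have h1 := AddSubgroup.card_add_eq_card_addSubgroup_add_card_quotient K (S : Set G)
  have h2 : (S : Set G) + (K : Set G) = S := by
    ext x
    constructor
    · rintro ⟨s, hs, k, hk, rfl⟩
      have := h k hk s hs
      simpa [add_comm] using this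
    · intro hx
      exact ⟨x, hx, 0, K.zero_mem, by simp⟩
  rw [h2] at h1
  have h3 : Nat.card (S : Set G) = S.card := by simp
  rw [← h3, h1]
  exact dvd_mul_right _ _

/-- Grid counting. -/
lemma grid (H1 H2 : AddSubgroup G) (V W D : Finset G) (c : G)
    (hf : Finite ↥(H1 ⊓ H2))
    (hV : ∀ x ∈ V, x ∈ H1) (hW : ∀ x ∈ W, x ∈ H2)
    (hD : ∀ x ∈ V, ∀ y ∈ W, c + x + y ∈ D) :
    V.card * W.card ≤ Nat.card ↥(H1 ⊓ H2) * D.card := by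
  rw [← Finset.card_product]
  have key : (V ×ˢ W).card ≤ Nat.card ↥(H1 ⊓ H2) *
      ((V ×ˢ W).image (fun p : G × G => c + p.1 + p.2)).card := by
    apply Finset.card_le_mul_card_image
    intro z hz
    obtain ⟨⟨x0, y0⟩, h0, rfl⟩ := Finset.mem_image.1 hz
    rw [Finset.mem_product] at h0
    have hfin : ((H1 ⊓ H2 : AddSubgroup G) : Set G).Finite := hf
    have e : Nat.card ↥(H1 ⊓ H2) = hfin.toFinset.card := by
      exact Nat.card_eq_card_finite_toFinset hfin
    rw [e]
    apply Finset.card_le_card_of_injOn (fun p : G × G => p.1 - x0)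
    · rintro ⟨x, y⟩ hp
      simp only [Finset.coe_filter, Finset.mem_product, Set.mem_setOf_eq] at hp
      obtain ⟨⟨hx, hy⟩, he⟩ := hp
      have e2 : x - x0 = y0 - y := by
        have : x + y = x0 + y0 := by
          have := he; rw [add_assoc, add_assoc] at this; exact add_left_cancel this
        rw [sub_eq_sub_iff_add_eq_add, this, add_comm]
      simp only [Set.Finite.coe_toFinset, SetLike.mem_coe, AddSubgroup.mem_inf]
      refine ⟨H1.sub_mem (hV _ hx) (hV _ h0.1), ?_⟩
      rw [e2]
      exact H2.sub_mem (hW _ h0.2) (hW _ hy)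
    · rintro ⟨x, y⟩ hp ⟨x', y'⟩ hp' he
      simp only [Finset.coe_filter, Finset.mem_product, Set.mem_setOf_eq] at hp hp'
      have e1 : x = x' := by simpa using he
      have e2 := hp.2.trans hp'.2.symm
      subst e1
      have e3 : y = y' := add_left_cancel e2
      rw [e3]
  refine key.trans (Nat.mul_le_mul_left _ (Finset.card_le_card ?_))
  intro z hz
  obtain ⟨⟨x0, y0⟩, h0, rfl⟩ := Finset.mem_image.1 hz
  rw [Finset.mem_product] at h0
  exact hD _ h0.1 _ h0.2

/-- The information extracted from one coset. -/
lemma coset_info (C1 C2 : Finset G) (h1 : C1.Nonempty) (h2 : C2.Nonempty) (c : G)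
    (hc2 : c ∈ C2) (hc1 : c ∉ C1) :
    ∃ k m1 m2 u v : ℕ, 0 < k ∧ k = Nat.card ↥(AddAction.stabilizer G C1 ⊓ AddAction.stabilizer G C2)
      ∧ (st C1).card = k * m1 ∧ (st C2).card = k * m2 ∧ 1 ≤ v ∧ v ≤ m1 ∧ u < m2 ∧
      k * (v * (m2 - u)) ≤ (C2 \ C1).card ∧ k * (u * (m1 - v)) ≤ (C1 \ C2).card := by
  set S1 := AddAction.stabilizer G C1 with hS1
  set S2 := AddAction.stabilizer G C2 with hS2
  have m1 : ∀ g, g ∈ st C1 ↔ g ∈ S1 := fun g => mem_st_iff h1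
  have m2 : ∀ g, g ∈ st C2 ↔ g ∈ S2 := fun g => mem_st_iff h2
  have a1 : ∀ g, g ∈ S1 → ∀ x, g + x ∈ C1 ↔ x ∈ C1 := by
    intro g hg x
    refine ⟨fun h => ?_, fun h => (mem_st h1).1 ((m1 g).2 hg) x h⟩
    have := (mem_st h1).1 ((m1 (-g)).2 (S1.neg_mem hg)) _ h
    simpa using this
  have a2 : ∀ g, g ∈ S2 → ∀ x, g + x ∈ C2 ↔ x ∈ C2 := by
    intro g hg x
    refine ⟨fun h => ?_, fun h => (mem_st h2).1 ((m2 g).2 hg) x h⟩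
    have := (mem_st h2).1 ((m2 (-g)).2 (S2.neg_mem hg)) _ h
    simpa using this
  have hf : Finite ↥(S1 ⊓ S2) := by
    have : ((S1 ⊓ S2 : AddSubgroup G) : Set G).Finite := by
      refine (st C1).finite_toSet.subset ?_
      intro g hg
      exact (m1 g).2 hg.1
    exact this
  set U := (st C2).filter (fun y => c + y ∈ C1) with hU
  set V := (st C1).filter (fun x => c + x ∈ C2) with hV
  have dU : Nat.card ↥(S1 ⊓ S2) ∣ U.card := by
    apply dvd_card
    intro k hk s hs
    rw [hU, Finset.mem_filter] at hs ⊢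
    refine ⟨(m2 _).2 (S2.add_mem hk.2 ((m2 _).1 hs.1)), ?_⟩
    rw [add_left_comm]
    exact (a1 k hk.1 _).2 hs.2
  have dV : Nat.card ↥(S1 ⊓ S2) ∣ V.card := by
    apply dvd_card
    intro k hk s hs
    rw [hV, Finset.mem_filter] at hs ⊢
    refine ⟨(m1 _).2 (S1.add_mem hk.1 ((m1 _).1 hs.1)), ?_⟩
    rw [add_left_comm]
    exact (a2 k hk.2 _).2 hs.2
  have d1 : Nat.card ↥(S1 ⊓ S2) ∣ (st C1).card := by
    apply dvd_card
    intro k hk s hs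
    exact (m1 _).2 (S1.add_mem hk.1 ((m1 _).1 hs))
  have d2 : Nat.card ↥(S1 ⊓ S2) ∣ (st C2).card := by
    apply dvd_card
    intro k hk s hs
    exact (m2 _).2 (S2.add_mem hk.2 ((m2 _).1 hs))
  have g1 := grid S1 S2 V (st C2 \ U) (C2 \ C1) c hf
    (fun x hx => (m1 x).1 (Finset.mem_filter.1 hx).1)
    (fun x hx => (m2 x).1 (Finset.mem_sdiff.1 hx).1) (by
      intro x hx y hy
      rw [hV, Finset.mem_filter] at hx
      rw [Finset.mem_sdiff, hU, Finset.mem_filter] at hy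
      have hy1 := (m2 _).1 hy.1
      have hx1 := (m1 _).1 hx.1
      rw [Finset.mem_sdiff]
      constructor
      · rw [add_comm]; exact (a2 y hy1 _).2 hx.2
      · rw [add_right_comm, add_comm, a1 x hx1]
        exact fun h => hy.2 ⟨hy.1, h⟩)
  have g2 := grid S1 S2 (st C1 \ V) U (C1 \ C2) c hf
    (fun x hx => (m1 x).1 (Finset.mem_sdiff.1 hx).1)
    (fun x hx => (m2 x).1 (Finset.mem_filter.1 hx).1) (by
      intro x hx y hy
      rw [hU, Finset.mem_filter] at hy
      rw [Finset.mem_sdiff, hV, Finset.mem_filter] at hx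
      have hy1 := (m2 _).1 hy.1
      have hx1 := (m1 _).1 hx.1
      rw [Finset.mem_sdiff]
      constructor
      · rw [add_right_comm, add_comm]; exact (a1 x hx1 _).2 hy.2
      · rw [add_comm, a2 y hy1]
        exact fun h => hx.2 ⟨hx.1, h⟩)
  have sU : U ⊆ st C2 := Finset.filter_subset _ _
  have sV : V ⊆ st C1 := Finset.filter_subset _ _
  rw [Finset.card_sdiff_of_subset sU] at g1
  rw [Finset.card_sdiff_of_subset sV] at g2
  have z1 : (0 : G) ∈ V := by
    rw [hV, Finset.mem_filter]
    exact ⟨(m1 0).2 S1.zero_mem, by simpa using hc2⟩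
  have z2 : (0 : G) ∉ U := by
    rw [hU, Finset.mem_filter]
    rintro ⟨_, h⟩
    exact hc1 (by simpa using h)
  have lU : U.card < (st C2).card := by
    apply Finset.card_lt_card
    refine ⟨sU, fun h => z2 (h ((m2 0).2 S2.zero_mem))⟩
  have lV : V.card ≤ (st C1).card := Finset.card_le_card sV
  have pV : 0 < V.card := Finset.card_pos.2 ⟨0, z1⟩
  have kpos : 0 < Nat.card ↥(S1 ⊓ S2) := Nat.card_pos
  generalize hk : Nat.card ↥(S1 ⊓ S2) = k at *
  obtain ⟨u, hu⟩ := dU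
  obtain ⟨v, hv⟩ := dV
  obtain ⟨n1, hn1⟩ := d1
  obtain ⟨n2, hn2⟩ := d2
  rw [hu, hn2] at lU
  rw [hv, hn1] at lV
  rw [hv] at pV
  rw [hu, hv, hn2, ← Nat.mul_sub] at g1
  rw [hu, hv, hn1, ← Nat.mul_sub] at g2
  refine ⟨k, n1, n2, u, v, kpos, rfl, hn1, hn2, Nat.pos_of_mul_pos_left pV,
    Nat.le_of_mul_le_mul_left lV kpos, Nat.lt_of_mul_lt_mul_left lU, ?_, ?_⟩
  · apply Nat.le_of_mul_le_mul_left _ kpos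
    calc _ = k * v * (k * (n2 - u)) := by ring
      _ ≤ _ := g1
  · apply Nat.le_of_mul_le_mul_left _ kpos
    calc _ = k * (n1 - v) * (k * u) := by ring
      _ ≤ _ := g2

lemma arith1 {k m1 m2 u v X Y : ℕ} (hk : 0 < k) (hv : 1 ≤ v) (hv1 : v ≤ m1) (hu : u < m2)
    (hX : k * (v * (m2 - u)) ≤ X) (hY : k * (u * (m1 - v)) ≤ Y)
    (nX : X + k < k * m1) (nY : Y + k < k * m2) : m2 < m1 := by
  obtain ⟨p, rfl⟩ := Nat.exists_eq_add_of_lt hu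
  obtain ⟨q, rfl⟩ := Nat.exists_eq_add_of_le hv1
  have e1 : u + p + 1 - u = p + 1 := by omega
  have e2 : v + q - v = q := by omega
  rw [e1] at hX
  rw [e2] at hY
  have x1 : v * (p + 1) + 1 < v + q := by
    apply Nat.lt_of_mul_lt_mul_left (a := k)
    calc _ = k * (v * (p + 1)) + k := by ring
      _ ≤ X + k := by omega
      _ < _ := nX
  have x2 : u * q + 1 < u + p + 1 := by
    apply Nat.lt_of_mul_lt_mul_left (a := k)
    calc _ = k * (u * q) + k := by ring
      _ ≤ Y + k := by omega
      _ < _ := nY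
  rcases Nat.eq_zero_or_pos u with rfl | hu0
  · nlinarith
  · exfalso
    rcases Nat.eq_zero_or_pos q with rfl | hq
    · nlinarith
    · obtain ⟨s, rfl⟩ := Nat.exists_eq_add_of_le hu0
      obtain ⟨t, rfl⟩ := Nat.exists_eq_add_of_le hq
      obtain ⟨w, rfl⟩ := Nat.exists_eq_add_of_le hv
      nlinarith [Nat.zero_le (s * t), Nat.zero_le (w * p)]

/-- Kneser's lemma on unions. -/
lemma union_lemma (C1 C2 : Finset G) (h1 : C1.Nonempty) (h2 : C2.Nonempty) (N : ℕ)
    (n1 : N ≤ C1.card + (st C1).card) (n2 : N ≤ C2.card + (st C2).card) :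
    N ≤ (C1 ∪ C2).card + (st (C1 ∪ C2)).card := by
  by_cases s12 : C1 ⊆ C2
  · rwa [Finset.union_eq_right.2 s12]
  by_cases s21 : C2 ⊆ C1
  · rwa [Finset.union_eq_left.2 s21]
  obtain ⟨c, hc2, hc1⟩ := Finset.not_subset.1 s21
  obtain ⟨d, hd1, hd2⟩ := Finset.not_subset.1 s12
  obtain ⟨k, m1, m2, u, v, hk, ek, e1, e2, hv, hv1, hu, hX, hY⟩ :=
    coset_info C1 C2 h1 h2 c hc2 hc1
  obtain ⟨k', m1', m2', u', v', hk', ek', e1', e2', hv', hv1', hu', hX', hY'⟩ :=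
    coset_info C2 C1 h2 h1 d hd1 hd2
  rw [inf_comm, ← ek] at ek'
  subst ek'
  have q1 : m2' = m1 := Nat.eq_of_mul_eq_mul_left hk (e2'.symm.trans e1)
  have q2 : m1' = m2 := Nat.eq_of_mul_eq_mul_left hk (e1'.symm.trans e2)
  subst q1 q2
  have hne : (C1 ∪ C2).Nonempty := h1.mono Finset.subset_union_left
  have hks : k' ≤ (st (C1 ∪ C2)).card := by
    rw [ek, card_st hne]
    have hfin : Finite (AddAction.stabilizer G (C1 ∪ C2)) := by
      apply Nat.finite_of_card_ne_zero
      rw [← card_st hne]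
      refine (Finset.card_pos.2 ⟨0, (mem_st hne).2 (by simp)⟩).ne'
    apply AddSubgroup.card_le_of_le
    intro g hg
    rw [← mem_st_iff hne, mem_st hne]
    intro x hx
    rw [Finset.mem_union] at hx ⊢
    exact hx.imp ((mem_st h1).1 ((mem_st_iff h1).2 hg.1) x)
      ((mem_st h2).1 ((mem_st_iff h2).2 hg.2) x)
  have t1 : (C1 ∪ C2).card = C1.card + (C2 \ C1).card := by
    rw [← Finset.union_sdiff_self_eq_union, Finset.card_union_of_disjoint Finset.disjoint_sdiff]
  have t2 : (C1 ∪ C2).card = C2.card + (C1 \ C2).card := by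
    rw [Finset.union_comm, ← Finset.union_sdiff_self_eq_union,
      Finset.card_union_of_disjoint Finset.disjoint_sdiff]
  by_contra hcon
  have nX : (C2 \ C1).card + k' < k' * m2' := by omega
  have nY : (C1 \ C2).card + k' < k' * m1' := by omega
  have r1 := arith1 hk hv hv1 hu hX hY nX nY
  have r2 := arith1 hk hv' hv1' hu' hX' hY' nY nX
  omega

/-- Every element of the sumset is contained in a good subset. -/
lemma exists_good (n : ℕ) : ∀ (A B : Finset G), B.card = n → ∀ a0 ∈ A, ∀ b0 ∈ B,
    ∃ C, a0 + b0 ∈ C ∧ C ⊆ A + B ∧ A.card + B.card ≤ C.card + (st C).card := by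
  induction n using Nat.strong_induction_on with
  | _ n ih =>
  intro A B hn a0 ha0 b0 hb0
  by_cases hall : ∀ a ∈ A, ∀ b ∈ B, a - b0 + b ∈ A
  · refine ⟨A + {b0}, Finset.add_mem_add ha0 (Finset.mem_singleton_self _),
      Finset.add_subset_add_left (by simpa using hb0), ?_⟩
    have hne : (A + {b0}).Nonempty := ⟨a0 + b0, Finset.add_mem_add ha0 (Finset.mem_singleton_self _)⟩
    have c1 : (A + {b0}).card = A.card := by simp
    rw [c1]
    apply Nat.add_le_add_left
    apply Finset.card_le_card_of_injOn (fun b => b - b0)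
    · intro b hb
      have : b - b0 ∈ st (A + {b0}) := by
        rw [mem_st hne]
        intro x hx
        obtain ⟨a, ha, b', hb', rfl⟩ := Finset.mem_add.1 hx
        rw [Finset.mem_singleton] at hb'
        subst hb'
        refine Finset.mem_add.2 ⟨a - b' + b, hall a ha b hb, b', by simp, by abel⟩
      exact this
    · intro x _ y _ h
      simpa using h
  · push Not at hall
    obtain ⟨a, ha, b, hb, hab⟩ := hall
    set e := a - b0 with he
    set T := B.image (fun x => e + x) with hT
    set B' := B.filter (fun x => e + x ∈ A) with hB'
    have cT : T.card = B.card := Finset.card_image_of_injective _ (add_right_injective e)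
    have cB : B'.card = (A ∩ T).card := by
      rw [← Finset.card_image_of_injective B' (add_right_injective e)]
      congr 1
      ext z
      simp only [hB', hT, Finset.mem_image, Finset.mem_filter, Finset.mem_inter]
      constructor
      · rintro ⟨x, ⟨hx, hx'⟩, rfl⟩
        exact ⟨hx', x, hx, rfl⟩
      · rintro ⟨hx', x, hx, rfl⟩
        exact ⟨x, ⟨hx, hx'⟩, rfl⟩
    have csum := Finset.card_union_add_card_inter A T
    have hlt : B'.card < n := by
      rw [← hn]
      apply Finset.card_lt_card
      refine ⟨Finset.filter_subset _ _, fun h => hab ?_⟩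
      exact (Finset.mem_filter.1 (h hb)).2
    obtain ⟨C, hC1, hC2, hC3⟩ := ih _ hlt (A ∪ T) B' rfl a0 (Finset.mem_union_left _ ha0) b0
      (Finset.mem_filter.2 ⟨hb0, by simpa [he] using ha⟩)
    refine ⟨C, hC1, hC2.trans ?_, by omega⟩
    intro z hz
    obtain ⟨x, hx, y, hy, rfl⟩ := Finset.mem_add.1 hz
    rw [hB', Finset.mem_filter] at hy
    rcases Finset.mem_union.1 hx with hx | hx
    · exact Finset.add_mem_add hx hy.1
    · obtain ⟨w, hw, rfl⟩ := Finset.mem_image.1 hx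
      exact Finset.mem_add.2 ⟨e + y, hy.2, w, hw, by abel⟩

lemma weak_kneser (A B : Finset G) (hA : A.Nonempty) (hB : B.Nonempty) :
    A.card + B.card ≤ (A + B).card + (st (A + B)).card := by
  have key : ∀ S : Finset G, S ⊆ A + B → S.Nonempty → ∃ C, S ⊆ C ∧ C ⊆ A + B ∧
      A.card + B.card ≤ C.card + (st C).card := by
    intro S
    induction S using Finset.induction_on with
    | empty => intro _ h; simp at h
    | insert x S _ ih =>
      intro hS _
      obtain ⟨a, ha, b, hb, hab⟩ := Finset.mem_add.1 (hS (Finset.mem_insert_self x S))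
      obtain ⟨C, hC1, hC2, hC3⟩ := exists_good B.card A B rfl a ha b hb
      rw [hab] at hC1
      rcases S.eq_empty_or_nonempty with rfl | hne
      · exact ⟨C, by simpa using hC1, hC2, hC3⟩
      · obtain ⟨D, hD1, hD2, hD3⟩ := ih ((Finset.subset_insert x S).trans hS) hne
        refine ⟨C ∪ D, ?_, Finset.union_subset hC2 hD2,
          union_lemma C D ⟨x, hC1⟩ (hne.mono hD1) _ hC3 hD3⟩
        exact Finset.insert_subset (Finset.mem_union_left _ hC1)
          (hD1.trans Finset.subset_union_right)
  obtain ⟨C, h1, h2, h3⟩ := key (A + B) subset_rfl (hA.add hB)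
  rwa [h2.antisymm h1] at h3

end KneserAux

open KneserAux in
theorem kneser_theorem {G : Type*} [AddCommGroup G] [DecidableEq G]
    (A B H : Finset G) (hA : A.Nonempty) (hB : B.Nonempty)
    (hcard : (A + B).card < A.card + B.card)
    (hH : ∀ g : G, g ∈ H ↔ ∀ x ∈ A + B, g + x ∈ A + B) :
    (A + B).card + H.card = (A + H).card + (B + H).card := by
  have hne := hA.add hB
  have hHst : H = st (A + B) := by
    ext g; rw [hH, mem_st hne]
  have hmem : ∀ g, g ∈ H ↔ g ∈ AddAction.stabilizer G (A + B) := fun g => by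
    rw [hHst]; exact mem_st_iff hne
  have h0 : (0 : G) ∈ H := (hmem 0).2 (AddSubgroup.zero_mem _)
  have hadd : ∀ x ∈ H, ∀ y ∈ H, x + y ∈ H := fun x hx y hy =>
    (hmem _).2 (AddSubgroup.add_mem _ ((hmem _).1 hx) ((hmem _).1 hy))
  have hsum : (A + H) + (B + H) = A + B := by
    ext z
    constructor
    · intro hz
      obtain ⟨p, hp, q, hq, rfl⟩ := Finset.mem_add.1 hz
      obtain ⟨a, ha, g, hg, rfl⟩ := Finset.mem_add.1 hp
      obtain ⟨b, hb, g', hg', rfl⟩ := Finset.mem_add.1 hq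
      have := (hH _).1 (hadd g hg g' hg') _ (Finset.add_mem_add ha hb)
      convert this using 1
      abel
    · intro hz
      obtain ⟨a, ha, b, hb, rfl⟩ := Finset.mem_add.1 hz
      refine Finset.add_mem_add (Finset.mem_add.2 ⟨a, ha, 0, h0, by simp⟩)
        (Finset.mem_add.2 ⟨b, hb, 0, h0, by simp⟩)
  have hlow := weak_kneser (A + H) (B + H) (hA.add ⟨0, h0⟩) (hB.add ⟨0, h0⟩)
  rw [hsum, ← hHst] at hlow
  have ck : Nat.card (AddAction.stabilizer G (A + B)) = H.card := by
    rw [hHst, card_st hne]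
  have dS : ∀ X : Finset G, H.card ∣ (X + H).card := by
    intro X
    rw [← ck]
    apply dvd_card
    intro k hk s hs
    obtain ⟨x, hx, g, hg, rfl⟩ := Finset.mem_add.1 hs
    exact Finset.mem_add.2 ⟨x, hx, k + g, hadd k ((hmem k).2 hk) g hg, by abel⟩
  have dAB : H.card ∣ (A + B).card := by
    rw [← ck]
    apply dvd_card
    intro k hk s hs
    exact (hH k).1 ((hmem k).2 hk) s hs
  have lS : ∀ X : Finset G, X.card ≤ (X + H).card := by
    intro X
    apply Finset.card_le_card
    intro x hx
    exact Finset.mem_add.2 ⟨x, hx, 0, h0, by simp⟩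
  have lA := lS A
  have lB := lS B
  obtain ⟨p, hp⟩ := dS A
  obtain ⟨q, hq⟩ := dS B
  obtain ⟨r, hr⟩ := dAB
  have hlt : r < p + q := by
    apply Nat.lt_of_mul_lt_mul_left (a := H.card)
    rw [Nat.mul_add]
    omega
  have hle : H.card * (r + 1) ≤ H.card * (p + q) := Nat.mul_le_mul_left _ hlt
  rw [Nat.mul_add, Nat.mul_add] at hle
  omega
end

section
/- Let U = {0 = u_1 < u_2 < ... < u_s} and V = {v_1 < ... < v_t} be nonempty finite sets of integers with V ⊆ U and gcd(u_2, ..., u_s) = 1. Then |U+V| ≥ min(u_s + t, s + 2t - 3). Moreover, if U ≠ V and u_s = s + t - 2, then |U+V| ≥ u_s + t. -/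
open Pointwise

/-- The coset of `H` through `x`, as a finset. -/
noncomputable def coF {G : Type*} [AddCommGroup G] [Fintype G] (H : AddSubgroup G) (x : G) :
    Finset G := by
  classical exact Finset.univ.filter (fun g => g - x ∈ H)

theorem mem_coF {G : Type*} [AddCommGroup G] [Fintype G] (H : AddSubgroup G) (x g : G) :
    g ∈ coF H x ↔ g - x ∈ H := by
  classical
  simp [coF]

theorem card_coF {G : Type*} [AddCommGroup G] [Fintype G] (H : AddSubgroup G) (x : G) :
    (coF H x).card = (coF H 0).card := by
  classical
  refine Finset.card_bij' (fun g _ => g - x) (fun g _ => g + x) ?_ ?_ ?_ ?_ <;>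
    simp [mem_coF]

/-- `C` is a union of `H`-cosets. -/
def Stab {G : Type*} [AddCommGroup G] (H : AddSubgroup G) (C : Finset G) : Prop :=
  ∀ h ∈ H, ∀ c ∈ C, h + c ∈ C

theorem Stab.iff {G : Type*} [AddCommGroup G] {H : AddSubgroup G} {C : Finset G}
    (hs : Stab H C) {x y : G} (h : x - y ∈ H) : x ∈ C ↔ y ∈ C := by
  constructor
  · intro hx
    have := hs _ (H.neg_mem h) _ hx
    simpa using this
  · intro hy
    have := hs _ h _ hy
    simpa using this

theorem card_inter_coset {G : Type*} [AddCommGroup G] [Fintype G] [DecidableEq G]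
    {H1 H2 : AddSubgroup G} {C : Finset G} (hs : Stab H1 C) {x y k1 k2 : G}
    (h1 : k1 ∈ H1) (h2 : k2 ∈ H2) (hxy : y = x + k1 + k2) :
    (coF H2 y ∩ C).card = (coF H2 x ∩ C).card := by
  subst hxy
  refine Finset.card_bij' (fun g _ => g - k1) (fun g _ => g + k1) ?_ ?_ ?_ ?_
  · intro g hg
    simp only [Finset.mem_inter, mem_coF] at hg ⊢
    refine ⟨?_, ?_⟩
    · have := H2.add_mem hg.1 h2
      have e : g - (x + k1 + k2) + k2 = g - k1 - x := by abel
      rwa [e] at this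
    · exact (hs.iff (by simpa using h1)).1 hg.2
  · intro g hg
    simp only [Finset.mem_inter, mem_coF] at hg ⊢
    refine ⟨?_, ?_⟩
    · have := H2.sub_mem hg.1 h2
      have e : g + k1 - (x + k1 + k2) = g - x - k2 := by abel
      rwa [e]
    · exact (hs.iff (by simpa using h1)).2 hg.2
  · intro g _; simp
  · intro g _; simp

theorem cross_bound {G : Type*} [AddCommGroup G] [Fintype G] [DecidableEq G]
    {H1 H2 : AddSubgroup G} {C1 C2 : Finset G} (hs1 : Stab H1 C1) (hs2 : Stab H2 C2) {x : G}
    (hx1 : x ∈ C1) (hx2 : x ∉ C2) :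
    (coF H1 0).card + (coF H2 x ∩ C1).card ≤
      (C1 \ C2).card + (coF (H1 ⊓ H2) 0).card + (coF H1 x ∩ C2).card := by
  have e1 : (coF H1 x \ C2).card + (coF H1 x ∩ C2).card = (coF H1 0).card := by
    rw [Finset.card_sdiff_add_card_inter, card_coF]
  have e2 := Finset.card_union_add_card_inter (coF H1 x \ C2) (coF H2 x ∩ C1)
  have e3 : (coF H1 x \ C2) ∪ (coF H2 x ∩ C1) ⊆ C1 \ C2 := by
    intro g hg
    simp only [Finset.mem_union, Finset.mem_sdiff, Finset.mem_inter, mem_coF] at hg ⊢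
    rcases hg with ⟨h, h'⟩ | ⟨h, h'⟩
    · exact ⟨(hs1.iff h).2 hx1, h'⟩
    · exact ⟨h', fun hh => hx2 ((hs2.iff h).1 hh)⟩
  have e4 : (coF H1 x \ C2) ∩ (coF H2 x ∩ C1) ⊆ coF (H1 ⊓ H2) x := by
    intro g hg
    simp only [Finset.mem_sdiff, Finset.mem_inter, mem_coF, AddSubgroup.mem_inf] at hg ⊢
    exact ⟨hg.1.1, hg.2.1⟩
  have e5 := Finset.card_le_card e3
  have e6 := Finset.card_le_card e4
  rw [card_coF] at e6
  omega

theorem far_bound {G : Type*} [AddCommGroup G] [Fintype G] [DecidableEq G]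
    {H1 H2 : AddSubgroup G} {C1 C2 : Finset G} (hs1 : Stab H1 C1) (hs2 : Stab H2 C2) {x : G}
    (hx1 : x ∈ C1) (hx2 : x ∉ C2)
    (hno : ∀ k1 ∈ H1, ∀ k2 ∈ H2, x + k1 + k2 ∈ C2 → x + k1 + k2 ∈ C1) :
    (coF H1 0).card ≤ (C1 \ C2).card ∨ (coF H2 0).card ≤ (C1 \ C2).card := by
  by_cases h : ∃ k ∈ H1, x + k ∈ C2
  · right
    obtain ⟨k, hk, hkC⟩ := h
    rw [← card_coF H2 x]
    refine Finset.card_le_card fun g hg => ?_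
    rw [mem_coF] at hg
    rw [Finset.mem_sdiff]
    refine ⟨?_, fun hh => hx2 ((hs2.iff hg).1 hh)⟩
    have h1 : x + k + (g - x) ∈ C2 := by
      refine (hs2.iff ?_).2 hkC
      simpa using hg
    have h2 := hno k hk _ hg h1
    refine (hs1.iff ?_).1 h2
    have e : x + k + (g - x) - g = k := by abel
    rwa [e]
  · left
    push Not at h
    rw [← card_coF H1 x]
    refine Finset.card_le_card fun g hg => ?_
    rw [mem_coF] at hg
    rw [Finset.mem_sdiff]
    refine ⟨(hs1.iff hg).2 hx1, fun hh => h _ hg ?_⟩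
    simpa using hh

theorem union_lemma {G : Type*} [AddCommGroup G] [Fintype G] [DecidableEq G]
    {H1 H2 : AddSubgroup G} {C1 C2 : Finset G} (hs1 : Stab H1 C1) (hs2 : Stab H2 C2) {m : ℕ}
    (hm1 : m ≤ C1.card + (coF H1 0).card) (hm2 : m ≤ C2.card + (coF H2 0).card) :
    ∃ H : AddSubgroup G, Stab H (C1 ∪ C2) ∧ m ≤ (C1 ∪ C2).card + (coF H 0).card := by
  by_cases h12 : C1 ⊆ C2
  · rw [Finset.union_eq_right.2 h12]; exact ⟨H2, hs2, hm2⟩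
  by_cases h21 : C2 ⊆ C1
  · rw [Finset.union_eq_left.2 h21]; exact ⟨H1, hs1, hm1⟩
  refine ⟨H1 ⊓ H2, ?_, ?_⟩
  · intro h hh c hc
    rw [AddSubgroup.mem_inf] at hh
    rw [Finset.mem_union] at hc ⊢
    exact hc.imp (hs1 h hh.1 c) (hs2 h hh.2 c)
  have u1 : (C1 ∪ C2).card = C1.card + (C2 \ C1).card := by
    rw [← Finset.card_union_of_disjoint Finset.disjoint_sdiff, Finset.union_sdiff_self_eq_union]
  have u2 : (C1 ∪ C2).card = C2.card + (C1 \ C2).card := by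
    rw [← Finset.card_union_of_disjoint Finset.disjoint_sdiff, Finset.union_sdiff_self_eq_union,
      Finset.union_comm]
  by_cases hp : ∃ x k1 k2, x ∈ C1 ∧ x ∉ C2 ∧ k1 ∈ H1 ∧ k2 ∈ H2 ∧ x + k1 + k2 ∈ C2 ∧
      x + k1 + k2 ∉ C1
  · obtain ⟨x, k1, k2, hx1, hx2, hk1, hk2, hy2, hy1⟩ := hp
    have b1 := cross_bound hs1 hs2 hx1 hx2
    have b2 := cross_bound hs2 hs1 hy2 hy1
    rw [inf_comm] at b2
    have c1 := card_inter_coset (H2 := H2) hs1 hk1 hk2 (x := x) rfl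
    have c2 := card_inter_coset (H2 := H1) hs2 hk2 hk1 (x := x) (y := x + k1 + k2) (by abel)
    rw [c1, c2] at b2
    omega
  · push Not at hp
    obtain ⟨x, hx1, hx2⟩ := Finset.not_subset.1 h12
    obtain ⟨y, hy2, hy1⟩ := Finset.not_subset.1 h21
    have b1 := far_bound hs1 hs2 hx1 hx2 (fun k1 h1 k2 h2 h => hp x k1 k2 hx1 hx2 h1 h2 h)
    have b2 := far_bound hs2 hs1 hy2 hy1 (fun k1 h1 k2 h2 h => by
      by_contra hc
      have := hp (y + k1 + k2) (-k2) (-k1) h hc (H1.neg_mem h2) (H2.neg_mem h1)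
      have e : y + k1 + k2 + -k2 + -k1 = y := by abel
      rw [e] at this
      exact hy1 (this hy2))
    omega

theorem dyson {G : Type*} [AddCommGroup G] [Fintype G] [DecidableEq G] (n : ℕ) :
    ∀ A B : Finset G, B.card ≤ n → A.Nonempty → (0 : G) ∈ B → ∀ a ∈ A,
    ∃ (C : Finset G) (H : AddSubgroup G), C ⊆ A + B ∧ a ∈ C ∧ Stab H C ∧
      A.card + B.card ≤ C.card + (coF H 0).card := by
  induction n with
  | zero =>
    intro A B hB _ h0
    have : B = ∅ := Finset.card_eq_zero.1 (by omega)
    simp [this] at h0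
  | succ n ih =>
    intro A B hB hA h0 a ha
    by_cases hall : ∀ e ∈ A, ∀ b ∈ B, e + b ∈ A
    · -- A + B = A
      let H : AddSubgroup G := AddAction.stabilizer G A
      have hH : ∀ g, g ∈ H ↔ g +ᵥ A = A := fun g => AddAction.mem_stabilizer_iff
      refine ⟨A, H, ?_, ha, ?_, ?_⟩
      · intro x hx
        exact Finset.mem_add.2 ⟨x, hx, 0, h0, add_zero x⟩
      · intro h hh c hc
        have := (hH h).1 hh
        rw [← this]
        exact Finset.vadd_mem_vadd_finset hc
      · have : B ⊆ coF H 0 := by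
          intro b hb
          rw [mem_coF, sub_zero, hH]
          refine Finset.eq_of_subset_of_card_le ?_ (by rw [Finset.card_vadd_finset])
          intro x hx
          obtain ⟨y, hy, rfl⟩ := Finset.mem_vadd_finset.1 hx
          rw [vadd_eq_add, add_comm]
          exact hall y hy b hb
        have := Finset.card_le_card this
        omega
    · push Not at hall
      obtain ⟨e, he, b, hb, hne⟩ := hall
      have hc1 : (e +ᵥ B).card = B.card := Finset.card_vadd_finset _ _
      have hc2 : (A ∩ (e +ᵥ B)).card = (B.filter (fun b => e + b ∈ A)).card := by
        rw [← Finset.card_vadd_finset e (B.filter (fun b => e + b ∈ A))]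
        congr 1
        ext x
        simp only [Finset.mem_inter, Finset.mem_vadd_finset, Finset.mem_filter, vadd_eq_add]
        constructor
        · rintro ⟨h, y, hy, rfl⟩; exact ⟨y, ⟨hy, h⟩, rfl⟩
        · rintro ⟨y, ⟨hy, h⟩, rfl⟩; exact ⟨h, y, hy, rfl⟩
      have hc3 := Finset.card_union_add_card_inter A (e +ᵥ B)
      have hlt : (B.filter (fun b => e + b ∈ A)).card < B.card := by
        refine Finset.card_lt_card ⟨Finset.filter_subset _ _, fun hh => ?_⟩
        exact hne (Finset.mem_filter.1 (hh hb)).2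
      obtain ⟨C, H, hC, haC, hs, hcard⟩ := ih (A ∪ (e +ᵥ B)) (B.filter (fun b => e + b ∈ A))
        (by omega) (hA.mono Finset.subset_union_left)
        (by simp [h0, he]) a (Finset.mem_union_left _ ha)
      refine ⟨C, H, hC.trans ?_, haC, hs, by omega⟩
      intro x hx
      obtain ⟨y, hy, z, hz, rfl⟩ := Finset.mem_add.1 hx
      rw [Finset.mem_filter] at hz
      rcases Finset.mem_union.1 hy with hy | hy
      · exact Finset.add_mem_add hy hz.1
      · obtain ⟨w, hw, rfl⟩ := Finset.mem_vadd_finset.1 hy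
        rw [vadd_eq_add]
        have e' : e + w + z = (e + z) + w := by abel
        rw [e']
        exact Finset.add_mem_add hz.2 hw

theorem dyson' {G : Type*} [AddCommGroup G] [Fintype G] [DecidableEq G]
    (A B : Finset G) (c : G) (hc : c ∈ A + B) :
    ∃ (C : Finset G) (H : AddSubgroup G), C ⊆ A + B ∧ c ∈ C ∧ Stab H C ∧
      A.card + B.card ≤ C.card + (coF H 0).card := by
  obtain ⟨a, ha, b, hb, rfl⟩ := Finset.mem_add.1 hc
  obtain ⟨C, H, hC, haC, hs, hcard⟩ := dyson _ (b +ᵥ A) (-b +ᵥ B) le_rfl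
    (Finset.Nonempty.vadd_finset ⟨a, ha⟩)
    (Finset.mem_vadd_finset.2 ⟨b, hb, by simp⟩) (a + b)
    (Finset.mem_vadd_finset.2 ⟨a, ha, by simp [add_comm]⟩)
  refine ⟨C, H, hC.trans ?_, haC, hs, by simpa using hcard⟩
  intro x hx
  obtain ⟨y, hy, z, hz, rfl⟩ := Finset.mem_add.1 hx
  obtain ⟨y, hy', rfl⟩ := Finset.mem_vadd_finset.1 hy
  obtain ⟨z, hz', rfl⟩ := Finset.mem_vadd_finset.1 hz
  have : (b +ᵥ y) + (-b +ᵥ z) = y + z := by simp only [vadd_eq_add]; abel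
  rw [this]
  exact Finset.add_mem_add hy' hz'

theorem kneser_weak {G : Type*} [AddCommGroup G] [Fintype G] [DecidableEq G]
    (A B : Finset G) (hA : A.Nonempty) (hB : B.Nonempty) :
    ∃ H : AddSubgroup G, Stab H (A + B) ∧ A.card + B.card ≤ (A + B).card + (coF H 0).card := by
  have key : ∀ T : Finset G, T.Nonempty → T ⊆ A + B → ∃ (C : Finset G) (H : AddSubgroup G),
      T ⊆ C ∧ C ⊆ A + B ∧ Stab H C ∧ A.card + B.card ≤ C.card + (coF H 0).card := by
    intro T hT
    induction hT using Finset.Nonempty.cons_induction with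
    | singleton a =>
      intro h
      obtain ⟨C, H, h1, h2, h3, h4⟩ := dyson' A B a (h (by simp))
      exact ⟨C, H, by simpa using h2, h1, h3, h4⟩
    | cons a s ha hs ih =>
      intro h
      rw [Finset.cons_subset] at h
      obtain ⟨C, H, h1, h2, h3, h4⟩ := dyson' A B a h.1
      obtain ⟨C', H', h1', h2', h3', h4'⟩ := ih h.2
      obtain ⟨K, hK1, hK2⟩ := union_lemma h3 h3' h4 h4'
      refine ⟨C ∪ C', K, ?_, Finset.union_subset h1 h2', hK1, hK2⟩
      rw [Finset.cons_subset]
      exact ⟨Finset.mem_union_left _ h2, h1'.trans Finset.subset_union_right⟩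
  obtain ⟨C, H, h1, h2, h3, h4⟩ := key (A + B) (hA.add hB) subset_rfl
  obtain rfl : C = A + B := subset_antisymm h2 h1
  exact ⟨H, h3, h4⟩

theorem kneser {G : Type*} [AddCommGroup G] [Fintype G] [DecidableEq G]
    (A B : Finset G) (hA : A.Nonempty) (hB : B.Nonempty) :
    ∃ H : AddSubgroup G, (A + coF H 0).card + (B + coF H 0).card ≤
      (A + B).card + (coF H 0).card := by
  let H : AddSubgroup G := AddAction.stabilizer G (A + B)
  have hH : ∀ g, g ∈ H ↔ g +ᵥ (A + B) = A + B := fun g => AddAction.mem_stabilizer_iff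
  have h0 : (coF H 0).Nonempty := ⟨0, by simp [mem_coF, H.zero_mem]⟩
  obtain ⟨K, hK, hcard⟩ := kneser_weak (A + coF H 0) (B + coF H 0) (hA.add h0) (hB.add h0)
  have hsum : (A + coF H 0) + (B + coF H 0) = A + B := by
    apply subset_antisymm
    · intro x hx
      obtain ⟨y, hy, z, hz, rfl⟩ := Finset.mem_add.1 hx
      obtain ⟨a, ha, k, hk, rfl⟩ := Finset.mem_add.1 hy
      obtain ⟨b, hb, k', hk', rfl⟩ := Finset.mem_add.1 hz
      rw [mem_coF, sub_zero] at hk hk'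
      have := (hH _).1 (H.add_mem hk hk')
      rw [← this]
      exact Finset.mem_vadd_finset.2 ⟨a + b, Finset.add_mem_add ha hb, by
        simp only [vadd_eq_add]; abel⟩
    · intro x hx
      obtain ⟨a, ha, b, hb, rfl⟩ := Finset.mem_add.1 hx
      have z0 : (0 : G) ∈ coF H 0 := by simp [mem_coF, H.zero_mem]
      refine Finset.add_mem_add ?_ ?_
      · simpa using Finset.add_mem_add ha z0
      · simpa using Finset.add_mem_add hb z0
  rw [hsum] at hK hcard
  refine ⟨H, hcard.trans ?_⟩
  have : coF K 0 ⊆ coF H 0 := by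
    intro k hk
    rw [mem_coF, sub_zero] at hk ⊢
    rw [hH]
    refine Finset.eq_of_subset_of_card_le ?_ (by rw [Finset.card_vadd_finset])
    intro x hx
    obtain ⟨y, hy, rfl⟩ := Finset.mem_vadd_finset.1 hx
    exact hK k hk y hy
  have := Finset.card_le_card this
  omega

/-- Lifting count: outside of the residues in `K`, where `K` avoids the residues of `Y`. -/
theorem lift_count {n : ℕ} (hn : 0 < n) (X Y : Finset ℤ) (h0 : 0 ∈ X) (hl : (n : ℤ) ∈ X)
    (K : Finset (ZMod n)) (hK : ∀ y ∈ Y, (y : ZMod n) ∉ K) :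
    (((X + Y).image (fun z : ℤ => (z : ZMod n))) \ K).card + Y.card ≤
      ((X + Y).filter (fun z : ℤ => (z : ZMod n) ∉ K)).card := by
  set S := (X + Y).filter (fun z : ℤ => (z : ZMod n) ∉ K) with hS
  set T := Y.image (fun y => (n : ℤ) + y) with hT
  have hTc : T.card = Y.card := Finset.card_image_of_injective _ (add_right_injective _)
  have hTS : T ⊆ S := by
    intro x hx
    obtain ⟨y, hy, rfl⟩ := Finset.mem_image.1 hx
    rw [hS, Finset.mem_filter]
    exact ⟨Finset.add_mem_add hl hy, by simpa using hK y hy⟩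
  have hsub : (((X + Y).image (fun z : ℤ => (z : ZMod n))) \ K) ⊆
      (S \ T).image (fun z : ℤ => (z : ZMod n)) := by
    intro r hr
    rw [Finset.mem_sdiff, Finset.mem_image] at hr
    obtain ⟨⟨z, hz, rfl⟩, hrK⟩ := hr
    have hne : (S.filter (fun w : ℤ => (w : ZMod n) = (z : ZMod n))).Nonempty :=
      ⟨z, by simp [hS, hz, hrK]⟩
    obtain ⟨w, hw, hmin⟩ := Finset.exists_min_image _ id hne
    rw [Finset.mem_filter] at hw
    refine Finset.mem_image.2 ⟨w, Finset.mem_sdiff.2 ⟨hw.1, fun hwT => ?_⟩, hw.2⟩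
    obtain ⟨y, hy, rfl⟩ := Finset.mem_image.1 hwT
    have hyS : y ∈ S := by
      rw [hS, Finset.mem_filter]
      exact ⟨by simpa using Finset.add_mem_add h0 hy, hK y hy⟩
    have := hmin y (by
      rw [Finset.mem_filter]
      exact ⟨hyS, by simpa using hw.2⟩)
    simp only [id] at this
    omega
  have h1 := (Finset.card_le_card hsub).trans Finset.card_image_le
  have h2 := Finset.card_sdiff_add_card_eq_card hTS
  omega

theorem image_add_cast {n : ℕ} (X Y : Finset ℤ) :
    (X + Y).image (fun z : ℤ => (z : ZMod n)) =
      X.image (fun z : ℤ => (z : ZMod n)) + Y.image (fun z : ℤ => (z : ZMod n)) :=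
  Finset.image_add (Int.castAddHom (ZMod n))

theorem gen_top {n : ℕ} (U : Finset ℤ) (hgcd : U.gcd id = 1) (H : AddSubgroup (ZMod n))
    (hH : ∀ u ∈ U, (u : ZMod n) ∈ H) (x : ZMod n) : x ∈ H := by
  obtain ⟨g, hg⟩ := Int.subgroup_cyclic (H.comap (Int.castAddHom (ZMod n)))
  have hmem : ∀ z : ℤ, (z : ZMod n) ∈ H ↔ g ∣ z := by
    intro z
    have : z ∈ H.comap (Int.castAddHom (ZMod n)) ↔ (z : ZMod n) ∈ H := by
      simp [AddSubgroup.mem_comap]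
    rw [← this, hg, ← AddSubgroup.zmultiples_eq_closure, Int.mem_zmultiples_iff]
  have h1 : g ∣ 1 := by
    rw [← hgcd]
    exact Finset.dvd_gcd fun u hu => (hmem u).1 (hH u hu)
  obtain ⟨z, rfl⟩ := ZMod.intCast_surjective x
  exact (hmem z).2 (h1.trans (one_dvd z))

theorem pigeon {G : Type*} [AddCommGroup G] [Fintype G] [DecidableEq G] (A B : Finset G)
    (h : Fintype.card G < A.card + B.card) (x : G) : x ∈ A + B := by
  have hc : (B.image (fun b => x - b)).card = B.card :=
    Finset.card_image_of_injective _ (sub_right_injective)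
  by_contra hx
  have hd : Disjoint A (B.image (fun b => x - b)) := by
    rw [Finset.disjoint_left]
    intro a ha hb
    obtain ⟨b, hb', rfl⟩ := Finset.mem_image.1 hb
    exact hx (by simpa using Finset.add_mem_add ha hb')
  have := Finset.card_le_univ (A ∪ B.image (fun b => x - b))
  rw [Finset.card_union_of_disjoint hd] at this
  omega

theorem missing {G : Type*} [AddCommGroup G] [Fintype G] [DecidableEq G] (A B : Finset G)
    (h : Fintype.card G = A.card + B.card) (a : G) (ha : a ∈ A) (haB : a ∉ B) :
    (A + B)ᶜ.card ≤ (A \ B).card := by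
  rcases ((A + B)ᶜ).eq_empty_or_nonempty with he | ⟨x, hx⟩
  · simp [he]
  have key : ∀ y ∈ (A + B)ᶜ, ∀ g, g ∉ A ↔ y - g ∈ B := by
    intro y hy g
    have hc : (B.image (fun b => y - b)).card = B.card :=
      Finset.card_image_of_injective _ (sub_right_injective)
    have : B.image (fun b => y - b) = Aᶜ := by
      refine Finset.eq_of_subset_of_card_le ?_ ?_
      · intro z hz
        obtain ⟨b, hb, rfl⟩ := Finset.mem_image.1 hz
        rw [Finset.mem_compl] at hy ⊢
        intro hA
        exact hy (by simpa using Finset.add_mem_add hA hb)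
      · rw [hc, Finset.card_compl]; omega
    rw [← Finset.mem_compl, ← this, Finset.mem_image]
    constructor
    · rintro ⟨b, hb, rfl⟩; simpa using hb
    · intro hb; exact ⟨_, hb, by abel⟩
  refine Finset.card_le_card_of_injOn (fun y => a + (y - x)) ?_ ?_
  · intro y hy
    have hy : y ∈ (A + B)ᶜ := hy
    simp only [Finset.coe_sdiff, Set.mem_sdiff, Finset.mem_coe]
    constructor
    · by_contra hc
      rw [key y hy] at hc
      have e : y - (a + (y - x)) = x - a := by abel
      rw [e, ← key x hx] at hc
      exact hc ha
    · intro hb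
      have e : a + (y - x) = y - (x - a) := by abel
      rw [e, ← key y hy, key x hx] at hb
      apply haB
      simpa using hb
  · intro y _ z _ hyz
    simpa using hyz

theorem card_add_coset {G : Type*} [AddCommGroup G] [Fintype G] [DecidableEq G] (A : Finset G)
    (H : AddSubgroup G) (a : G) (ha : a ∈ A) :
    A.card + (coF H 0).card ≤ (A + coF H 0).card + (A ∩ coF H a).card := by
  have e := Finset.card_union_add_card_inter A (coF H a)
  have : A ∪ coF H a ⊆ A + coF H 0 := by
    refine Finset.union_subset ?_ ?_
    · intro x hx
      simpa using Finset.add_mem_add hx (show (0 : G) ∈ coF H 0 by simp [mem_coF, H.zero_mem])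
    · intro x hx
      rw [mem_coF] at hx
      have h2 : x - a ∈ coF H 0 := by simpa [mem_coF] using hx
      simpa using Finset.add_mem_add ha h2
  have := Finset.card_le_card this
  rw [card_coF] at e
  omega

theorem main_bound_s7 {n : ℕ} (hn : 0 < n) (U V : Finset ℤ) (hV : V.Nonempty)
    (h0 : 0 ∈ U) (hl : (n : ℤ) ∈ U) (hgcd : U.gcd id = 1) :
    n + V.card ≤ (U + V).card ∨
    (U.image (fun z : ℤ => (z : ZMod n))).card + (V.image (fun z : ℤ => (z : ZMod n))).card
      + V.card ≤ (U + V).card + 1 := by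
  have : NeZero n := ⟨hn.ne'⟩
  set π : ℤ → ZMod n := fun z => (z : ZMod n) with hπ
  set A := U.image π with hA
  set B := V.image π with hB
  have hUne : U.Nonempty := ⟨0, h0⟩
  obtain ⟨H, hH⟩ := kneser A B (hUne.image _) (hV.image _)
  have hAB : (U + V).image π = A + B := image_add_cast U V
  by_cases hex : ∃ u ∈ U, ∃ v ∈ V, ∀ w ∈ V, π w ∉ coF H (π u + π v)
  · right
    obtain ⟨u, hu, v, hv, hK⟩ := hex
    have hcount := lift_count hn U V h0 hl (coF H (π u + π v)) hK
    change (((U + V).image π) \ _).card + _ ≤ _ at hcount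
    rw [hAB] at hcount
    have ca := card_add_coset A H (π u) (Finset.mem_image_of_mem _ hu)
    have cb := card_add_coset B H (π v) (Finset.mem_image_of_mem _ hv)
    have cs := Finset.card_sdiff_add_card_inter (A + B) (coF H (π u + π v))
    have ci := Finset.card_le_card
      (Finset.inter_subset_right : (A + B) ∩ coF H (π u + π v) ⊆ _)
    rw [card_coF] at ci
    have cf := Finset.card_filter_add_card_filter_not (s := U + V)
      (fun z : ℤ => π z ∈ coF H (π u + π v))
    set Ua := U.filter (fun z => π z ∈ coF H (π u)) with hUa
    set Vb := V.filter (fun z => π z ∈ coF H (π v)) with hVb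
    have ia : (A ∩ coF H (π u)).card ≤ Ua.card := by
      have : A ∩ coF H (π u) ⊆ Ua.image π := by
        intro x hx
        obtain ⟨hx1, hx2⟩ := Finset.mem_inter.1 hx
        obtain ⟨z, hz, rfl⟩ := Finset.mem_image.1 hx1
        exact Finset.mem_image_of_mem _ (Finset.mem_filter.2 ⟨hz, hx2⟩)
      exact (Finset.card_le_card this).trans Finset.card_image_le
    have ib : (B ∩ coF H (π v)).card ≤ Vb.card := by
      have : B ∩ coF H (π v) ⊆ Vb.image π := by
        intro x hx
        obtain ⟨hx1, hx2⟩ := Finset.mem_inter.1 hx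
        obtain ⟨z, hz, rfl⟩ := Finset.mem_image.1 hx1
        exact Finset.mem_image_of_mem _ (Finset.mem_filter.2 ⟨hz, hx2⟩)
      exact (Finset.card_le_card this).trans Finset.card_image_le
    have hUane : Ua.Nonempty := ⟨u, Finset.mem_filter.2 ⟨hu, by simp [mem_coF, H.zero_mem]⟩⟩
    have hVbne : Vb.Nonempty := ⟨v, Finset.mem_filter.2 ⟨hv, by simp [mem_coF, H.zero_mem]⟩⟩
    have cd := cauchy_davenport_add_of_linearOrder_isCancelAdd hUane hVbne
    have hsub : Ua + Vb ⊆ (U + V).filter (fun z : ℤ => π z ∈ coF H (π u + π v)) := by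
      intro x hx
      obtain ⟨y, hy, z, hz, rfl⟩ := Finset.mem_add.1 hx
      rw [Finset.mem_filter, mem_coF] at hy hz
      rw [Finset.mem_filter, mem_coF]
      refine ⟨Finset.add_mem_add hy.1 hz.1, ?_⟩
      have := H.add_mem hy.2 hz.2
      have e : π (y + z) - (π u + π v) = π y - π u + (π z - π v) := by
        simp only [hπ]; push_cast; abel
      rwa [e]
    have cd2 := Finset.card_le_card hsub
    have hUp := hUane.card_pos
    simp only [hπ] at *
    omega
  · left
    push Not at hex
    -- every element of `U` stabilises `B + H`
    have hstab : ∀ u ∈ U, π u ∈ AddAction.stabilizer (ZMod n) (B + coF H 0) := by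
      intro u hu
      rw [AddAction.mem_stabilizer_iff]
      refine Finset.eq_of_subset_of_card_le ?_ (by rw [Finset.card_vadd_finset])
      intro x hx
      obtain ⟨y, hy, rfl⟩ := Finset.mem_vadd_finset.1 hx
      obtain ⟨b, hb, k, hk, rfl⟩ := Finset.mem_add.1 hy
      obtain ⟨v, hv, rfl⟩ := Finset.mem_image.1 hb
      obtain ⟨w, hw, hwK⟩ := hex u hu v hv
      rw [mem_coF] at hwK hk
      have hk' : k - (π w - (π u + π v)) ∈ coF H 0 := by
        rw [mem_coF, sub_zero]
        exact H.sub_mem (by simpa using hk) hwK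
      have := Finset.add_mem_add (Finset.mem_image_of_mem π hw) hk'
      have e : π u +ᵥ (π v + k) = π w + (k - (π w - (π u + π v))) := by
        rw [vadd_eq_add]; abel
      rw [e]; exact this
    have hall := gen_top U hgcd _ hstab
    have hBH : B + coF H 0 = Finset.univ := by
      obtain ⟨v, hv⟩ := hV
      have hb : π v ∈ B + coF H 0 := by
        simpa using Finset.add_mem_add (Finset.mem_image_of_mem π hv)
          (show (0 : ZMod n) ∈ coF H 0 by simp [mem_coF, H.zero_mem])
      rw [Finset.eq_univ_iff_forall]
      intro x
      have := AddAction.mem_stabilizer_iff.1 (hall (x - π v))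
      rw [← this]
      exact Finset.mem_vadd_finset.2 ⟨π v, hb, by simp⟩
    have hAH : (coF H 0).card ≤ (A + coF H 0).card :=
      Finset.card_le_card_add_left (hUne.image _)
    rw [hBH, Finset.card_univ, ZMod.card] at hH
    have hcount := lift_count hn U V h0 hl ∅ (by simp)
    change (((U + V).image π) \ _).card + _ ≤ _ at hcount
    rw [hAB] at hcount
    simp only [Finset.sdiff_empty, Finset.notMem_empty, not_false_eq_true,
      Finset.filter_true] at hcount
    omega

/-- Casting is injective on `[0, n)` . -/
theorem zcast_inj {n : ℕ} {x y : ℤ} (hx : 0 ≤ x) (hx' : x < n) (hy : 0 ≤ y) (hy' : y < n)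
    (h : (x : ZMod n) = (y : ZMod n)) : x = y := by
  rw [ZMod.intCast_eq_intCast_iff] at h
  have := h.eq
  rwa [Int.emod_eq_of_lt hx hx', Int.emod_eq_of_lt hy hy'] at this

theorem card_cast_erase {n : ℕ} (X : Finset ℤ) (hX : ∀ x ∈ X, 0 ≤ x ∧ x < n) :
    (X.image (fun z : ℤ => (z : ZMod n))).card = X.card := by
  refine Finset.card_image_of_injOn ?_
  intro x hx y hy h
  exact zcast_inj (hX x hx).1 (hX x hx).2 (hX y hy).1 (hX y hy).2 h

theorem card_cast_erase' {n : ℕ} (X : Finset ℤ) (hX : ∀ x ∈ X, 0 < x ∧ x ≤ n) :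
    (X.image (fun z : ℤ => (z : ZMod n))).card = X.card := by
  refine Finset.card_image_of_injOn ?_
  intro x hx y hy h
  have h1 := hX x hx
  have h2 := hX y hy
  have := zcast_inj (n := n) (x := x - 1) (y := y - 1) (by omega) (by omega) (by omega) (by omega)
    (by push_cast; simpa using h)
  omega

/-- If both `0` and `n` are present, exactly one residue is lost. -/
theorem card_cast_both {n : ℕ} (hn : 0 < n) (X : Finset ℤ) (hX : ∀ x ∈ X, 0 ≤ x ∧ x ≤ n)
    (h0 : 0 ∈ X) (hl : (n : ℤ) ∈ X) :
    (X.image (fun z : ℤ => (z : ZMod n))).card + 1 = X.card := by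
  have e : X.image (fun z : ℤ => (z : ZMod n)) =
      (X.erase (n : ℤ)).image (fun z : ℤ => (z : ZMod n)) := by
    apply subset_antisymm
    · intro r hr
      obtain ⟨x, hx, rfl⟩ := Finset.mem_image.1 hr
      by_cases hxn : x = n
      · subst hxn
        exact Finset.mem_image.2 ⟨0, Finset.mem_erase.2 ⟨by omega, h0⟩, by simp⟩
      · exact Finset.mem_image_of_mem _ (Finset.mem_erase.2 ⟨hxn, hx⟩)
    · exact Finset.image_subset_image (Finset.erase_subset _ _)
  rw [e, card_cast_erase, Finset.card_erase_add_one hl]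
  intro x hx
  rw [Finset.mem_erase] at hx
  have := hX x hx.2
  have := hx.1
  omega

theorem card_cast_not_both {n : ℕ} (X : Finset ℤ) (hX : ∀ x ∈ X, 0 ≤ x ∧ x ≤ n)
    (h : ¬ (0 ∈ X ∧ (n : ℤ) ∈ X)) :
    (X.image (fun z : ℤ => (z : ZMod n))).card = X.card := by
  by_cases h0 : 0 ∈ X
  · refine card_cast_erase X fun x hx => ⟨(hX x hx).1, lt_of_le_of_ne (hX x hx).2 ?_⟩
    rintro rfl
    exact h ⟨h0, hx⟩
  · refine card_cast_erase' X fun x hx => ⟨lt_of_le_of_ne (hX x hx).1 ?_, (hX x hx).2⟩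
    rintro rfl
    exact h0 hx

theorem sumset_lower_bound_subset (U V : Finset ℤ) (hV : V.Nonempty)
    (hVU : V ⊆ U) (h0 : 0 ∈ U) (hpos : ∀ u ∈ U, 0 ≤ u)
    (uS : ℤ) (huS : uS ∈ U) (huSmax : ∀ u ∈ U, u ≤ uS)
    (hgcd : U.gcd id = 1) :
    min (uS + V.card) ((U.card : ℤ) + 2 * V.card - 3) ≤ ((U + V).card : ℤ) ∧
      (U ≠ V → uS = (U.card : ℤ) + V.card - 2 → uS + V.card ≤ ((U + V).card : ℤ)) := by
  obtain ⟨n, rfl⟩ := Int.eq_ofNat_of_zero_le (hpos uS huS)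
  have hn : 0 < n := by
    rcases Nat.eq_zero_or_pos n with rfl | h
    · exfalso
      have : (0 : ℤ) ∣ U.gcd id := Finset.dvd_gcd fun u hu => by
        have h1 := hpos u hu
        have h2 := huSmax u hu
        have : u = 0 := by simp at h2; omega
        simp [this]
      rw [hgcd] at this
      norm_num at this
    · exact h
  have : NeZero n := ⟨hn.ne'⟩
  have hUb : ∀ x ∈ U, 0 ≤ x ∧ x ≤ n := fun x hx => ⟨hpos x hx, huSmax x hx⟩
  have hVb : ∀ x ∈ V, 0 ≤ x ∧ x ≤ n := fun x hx => hUb x (hVU hx)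
  have cU := card_cast_both hn U hUb h0 huS
  have hcase : (0 ∈ V ∧ (n : ℤ) ∈ V) ∨ ¬ (0 ∈ V ∧ (n : ℤ) ∈ V) := em _
  constructor
  · have cV : V.card ≤ (V.image (fun z : ℤ => (z : ZMod n))).card + 1 := by
      rcases hcase with h | h
      · exact (card_cast_both hn V hVb h.1 h.2).ge
      · rw [card_cast_not_both V hVb h]; omega
    rcases main_bound_s7 hn U V hV h0 huS hgcd with h | h
    · refine (min_le_left _ _).trans ?_
      exact_mod_cast h
    · refine (min_le_right _ _).trans ?_
      omega
  · intro hne hEq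
    have hcard : Fintype.card (ZMod n) = n := ZMod.card n
    rcases hcase with h | h
    · have cV := card_cast_both hn V hVb h.1 h.2
      obtain ⟨u, hu, huV⟩ : ∃ u ∈ U, u ∉ V := by
        by_contra hc
        push Not at hc
        exact hne (subset_antisymm hc hVU)
      have hsub : V.image (fun z : ℤ => (z : ZMod n)) ⊆ U.image (fun z : ℤ => (z : ZMod n)) :=
        Finset.image_subset_image hVU
      have hm := missing (U.image (fun z : ℤ => (z : ZMod n)))
        (V.image (fun z : ℤ => (z : ZMod n))) (by omega) (u : ZMod n)
        (Finset.mem_image_of_mem (fun z : ℤ => (z : ZMod n)) hu) (by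
          intro hc
          obtain ⟨v, hv, hvu⟩ := Finset.mem_image.1 hc
          have hun : u ≠ n := fun hh => huV (hh ▸ h.2)
          have hu2 := hUb u hu
          have hv2 := hVb v hv
          by_cases hvn : v = n
          · subst hvn
            have : (0 : ℤ) = u := zcast_inj (n := n) le_rfl (by omega) (by omega) (by omega)
              (by simpa using hvu)
            exact huV (this ▸ h.1)
          · have : v = u := zcast_inj (n := n) (by omega) (by omega) (by omega) (by omega) hvu
            exact huV (this ▸ hv))
      rw [Finset.card_compl, hcard] at hm
      have hd := Finset.card_sdiff_add_card_eq_card hsub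
      have hcount := lift_count hn V U h.1 h.2 ∅ (by simp)
      rw [add_comm V U, image_add_cast] at hcount
      simp only [Finset.sdiff_empty, Finset.notMem_empty, not_false_eq_true,
        Finset.filter_true] at hcount
      omega
    · have cV := card_cast_not_both V hVb h
      have hfull : U.image (fun z : ℤ => (z : ZMod n)) + V.image (fun z : ℤ => (z : ZMod n)) =
          Finset.univ :=
        Finset.eq_univ_iff_forall.2 (pigeon _ _ (by omega))
      have hcount := lift_count hn U V h0 huS ∅ (by simp)
      rw [image_add_cast, hfull] at hcount
      simp only [Finset.sdiff_empty, Finset.notMem_empty, not_false_eq_true,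
        Finset.filter_true, Finset.card_univ, hcard] at hcount
      omega
end

section
/- Let s ≥ 2 and A' = {0 = a_1 < a_2 < ... < a_s} be a finite set of nonnegative integers with a_1 = 0 and gcd of its nonzero elements equal to 1. Let R = min(a_s - s + 3, s). Then |A'+A'| ≥ 2s + R - 3. -/
open Pointwise

/-- Pigeonhole: two subsets of an interval of total size larger than the interval meet. -/
lemma meet_of_card (B C : Finset ℤ) (u v : ℤ) (huv : u ≤ v + 1)
    (hB : B ⊆ Finset.Icc u v) (hC : C ⊆ Finset.Icc u v)
    (h : v - u + 1 < (B.card : ℤ) + C.card) : ∃ x, x ∈ B ∧ x ∈ C := by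
  by_contra hne
  push Not at hne
  have hd : Disjoint B C := Finset.disjoint_left.mpr hne
  have h1 := Finset.card_le_card (Finset.union_subset hB hC)
  rw [Finset.card_union_of_disjoint hd, Int.card_Icc] at h1
  omega

lemma dense_case (A : Finset ℤ) (n : ℤ) (h0 : 0 ∈ A) (hpos : ∀ a ∈ A, 0 ≤ a)
    (hn : n ∈ A) (hmax : ∀ a ∈ A, a ≤ n) (hd : n ≤ 2 * (A.card : ℤ) - 3) :
    n + A.card ≤ ((A + A).card : ℤ) := by
  have hn0 : 0 < n := by
    rcases (hpos n hn).lt_or_eq with h | h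
    · exact h
    · exfalso
      have : A ⊆ {0} := by
        intro a ha
        have := hpos a ha
        have := hmax a ha
        simp; omega
      have := Finset.card_le_card this
      simp at this
      omega
  set P := (A + A).filter (fun x => x < n) with hP
  set Q := (A + A).filter (fun x => n ≤ x ∧ x < 2 * n) with hQ
  set Q' := Q.image (fun x => x - n) with hQ'
  have hQc : Q'.card = Q.card :=
    Finset.card_image_of_injective _ (fun x y h => by simpa using h)
  have hA0 : (A.erase n).card = A.card - 1 := Finset.card_erase_of_mem hn
  have hAc : 0 < A.card := Finset.card_pos.mpr ⟨n, hn⟩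
  have hcover : Finset.Ico 0 n ⊆ P ∪ Q' := by
    intro x hx
    rw [Finset.mem_Ico] at hx
    obtain ⟨y, hy1, hy2⟩ := meet_of_card (A.erase n) ((A.erase n).image (fun a => (x - a) % n))
      0 (n - 1) (by omega) (by
        intro a ha
        have h1 := Finset.mem_of_mem_erase ha
        have h2 := Finset.ne_of_mem_erase ha
        have := hpos a h1
        have := hmax a h1
        rw [Finset.mem_Icc]; omega) (by
        intro a ha
        rw [Finset.mem_image] at ha
        obtain ⟨b, hb, rfl⟩ := ha
        have := Int.emod_nonneg (x - b) hn0.ne'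
        have := Int.emod_lt_of_pos (x - b) hn0
        rw [Finset.mem_Icc]; omega) (by
        rw [Finset.card_image_of_injOn, hA0]
        · omega
        · intro a ha b hb hab
          simp only [Finset.coe_erase, Set.mem_sdiff, Finset.mem_coe, Set.mem_singleton_iff] at ha hb
          have h1 := hpos a ha.1
          have h2 := hmax a ha.1
          have h3 := hpos b hb.1
          have h4 := hmax b hb.1
          have h5 := ha.2
          have h6 := hb.2
          have h7 : (x - a) ≡ (x - b) [ZMOD n] := hab
          have h8 := h7.dvd
          have h9 : x - b - (x - a) = 0 := by
            apply Int.eq_zero_of_abs_lt_dvd h8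
            rw [abs_lt]; omega
          omega)
    rw [Finset.mem_image] at hy2
    obtain ⟨b, hb, hby⟩ := hy2
    have hyA := Finset.mem_of_mem_erase hy1
    have hyn := Finset.ne_of_mem_erase hy1
    have hbA := Finset.mem_of_mem_erase hb
    have hbn := Finset.ne_of_mem_erase hb
    have := hpos _ hyA
    have := hmax _ hyA
    have := hpos _ hbA
    have := hmax _ hbA
    have hsum := Finset.add_mem_add hyA hbA
    have hdv : n ∣ (y + b - x) := by
      have : (x - b) % n = (x - b) - n * ((x - b) / n) := Int.emod_def _ _
      refine ⟨-((x - b) / n), ?_⟩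
      linarith
    obtain ⟨t, ht⟩ := hdv
    have hyn' : y < n := by omega
    have ht1 : t < 2 := by by_contra hh; nlinarith
    have ht2 : -1 < t := by by_contra hh; nlinarith
    have : t = 0 ∨ t = 1 := by omega
    rw [Finset.mem_union]
    rcases this with rfl | rfl
    · left
      have : y + b = x := by linarith
      rw [this] at hsum
      exact Finset.mem_filter.mpr ⟨hsum, hx.2⟩
    · right
      refine Finset.mem_image.mpr ⟨y + b, Finset.mem_filter.mpr ⟨hsum, ?_⟩, ?_⟩ <;> omega
  have hinter : A.erase n ⊆ P ∩ Q' := by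
    intro a ha
    have h1 := Finset.mem_of_mem_erase ha
    have h2 := Finset.ne_of_mem_erase ha
    have := hpos a h1
    have := hmax a h1
    refine Finset.mem_inter.mpr ⟨Finset.mem_filter.mpr ⟨?_, by omega⟩,
      Finset.mem_image.mpr ⟨a + n, Finset.mem_filter.mpr ⟨Finset.add_mem_add h1 hn, by omega⟩,
        by omega⟩⟩
    simpa using Finset.add_mem_add h1 h0
  have h2n : n + n ∈ A + A := Finset.add_mem_add hn hn
  have hsub : P ∪ Q ∪ {n + n} ⊆ A + A := by
    intro x hx
    simp only [Finset.mem_union, Finset.mem_singleton] at hx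
    rcases hx with (hx | hx) | rfl
    · exact (Finset.mem_filter.mp hx).1
    · exact (Finset.mem_filter.mp hx).1
    · exact h2n
  have hc := Finset.card_le_card hsub
  rw [Finset.card_union_of_disjoint, Finset.card_union_of_disjoint] at hc
  · have e1 := Finset.card_le_card hcover
    have e2 := Finset.card_le_card hinter
    have e3 := Finset.card_union_add_card_inter P Q'
    rw [Int.card_Ico] at e1
    rw [Finset.card_singleton] at hc
    omega
  · rw [Finset.disjoint_left]
    intro x hx hx'
    have := (Finset.mem_filter.mp hx).2
    have := (Finset.mem_filter.mp hx').2
    omega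
  · rw [Finset.disjoint_left]
    intro x hx hx'
    rw [Finset.mem_singleton] at hx'
    rw [Finset.mem_union] at hx
    rcases hx with hx | hx
    · have := (Finset.mem_filter.mp hx).2
      omega
    · have := (Finset.mem_filter.mp hx).2
      omega

lemma initial_cover (D : Finset ℤ) (_h0 : 0 ∈ D) (hpos : ∀ a ∈ D, 0 ≤ a)
    (hD : ∀ c ∈ D, c ≠ 0 → c ≤ 2 * ((D.filter (fun x => x < c)).card : ℤ) - 1)
    (x : ℤ) (hx0 : 0 ≤ x) (hx : x ≤ 2 * (D.card : ℤ) - 2) : x ∈ D + D := by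
  set B := D.filter (fun y => y ≤ x) with hB
  have key : x ≤ 2 * (B.card : ℤ) - 2 := by
    by_cases hne : (D.filter (fun y => x < y)).Nonempty
    · set c := (D.filter (fun y => x < y)).min' hne with hc
      have hcm := Finset.min'_mem _ hne
      rw [← hc, Finset.mem_filter] at hcm
      have h1 := hD c hcm.1 (by omega)
      have h2 : D.filter (fun y => y < c) = B := by
        rw [hB]
        apply Finset.filter_congr
        intro y hy
        constructor
        · intro hyc
          by_contra hh
          have := Finset.min'_le (D.filter (fun y => x < y)) y
            (Finset.mem_filter.mpr ⟨hy, by omega⟩)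
          omega
        · intro; omega
      rw [h2] at h1
      omega
    · have : B = D := by
        rw [hB, Finset.filter_eq_self]
        intro y hy
        by_contra hh
        exact hne ⟨y, Finset.mem_filter.mpr ⟨hy, by omega⟩⟩
      rw [this]; exact hx
  obtain ⟨y, hy1, hy2⟩ := meet_of_card B (B.image (fun a => x - a)) 0 x (by omega) (by
      intro a ha
      have := Finset.mem_filter.mp ha
      have := hpos a this.1
      rw [Finset.mem_Icc]; omega) (by
      intro a ha
      rw [Finset.mem_image] at ha
      obtain ⟨b, hb, rfl⟩ := ha
      have := Finset.mem_filter.mp hb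
      have := hpos b this.1
      rw [Finset.mem_Icc]; omega) (by
      rw [Finset.card_image_of_injective _ (fun a b h => by simpa using h)]
      omega)
  rw [Finset.mem_image] at hy2
  obtain ⟨b, hb, hby⟩ := hy2
  have : x = y + b := by omega
  rw [this]
  exact Finset.add_mem_add (Finset.mem_filter.mp hy1).1 (Finset.mem_filter.mp hb).1

lemma two_sets (A B : Finset ℤ) (hA : A.Nonempty) (hB : B.Nonempty) :
    (A.card : ℤ) + B.card - 1 ≤ ((A + B).card : ℤ) := by
  have := cauchy_davenport_add_of_linearOrder_isCancelAdd hA hB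
  omega

lemma jump_case (A : Finset ℤ) (n : ℤ) (h0 : 0 ∈ A) (hpos : ∀ a ∈ A, 0 ≤ a)
    (hn : n ∈ A) (hmax : ∀ a ∈ A, a ≤ n) (hd : 2 * (A.card : ℤ) - 2 ≤ n) (hn0 : 0 < n)
    (hno : ∀ c ∈ A, 0 < c → c < n →
      ¬ (0 ≤ c - 2 * ((A.filter (fun x => x < c)).card : ℤ) ∧
        c - 2 * ((A.filter (fun x => x < c)).card : ℤ) ≤ n - 2 * ((A.card : ℤ) - 1))) :
    3 * (A.card : ℤ) - 3 ≤ ((A + A).card : ℤ) := by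
  set N : ℤ → ℤ := fun c => ((A.filter (fun x => x < c)).card : ℤ) with hN
  have hno' : ∀ c ∈ A, 0 < c → c < n → c ≤ 2 * N c - 1 ∨
      n - 2 * ((A.card : ℤ) - 1) + 1 ≤ c - 2 * N c := by
    intro c hc h1 h2
    have := hno c hc h1 h2
    simp only [hN]
    omega
  -- no descent
  have hdesc : ∀ c ∈ A, 0 < c → n - 2 * ((A.card : ℤ) - 1) + 1 ≤ c - 2 * N c →
      ∀ c' ∈ A, c < c' → c' < n → n - 2 * ((A.card : ℤ) - 1) + 1 ≤ c' - 2 * N c' := by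
    intro c hc hc0 hfc c' hc' hcc' hc'n
    by_contra hlow
    set S := A.filter (fun x => c < x ∧ x - 2 * N x ≤ n - 2 * ((A.card : ℤ) - 1)) with hS
    have hSne : S.Nonempty := ⟨c', Finset.mem_filter.mpr ⟨hc', hcc', by omega⟩⟩
    set e := S.min' hSne with he
    have hem := Finset.mem_filter.mp (Finset.min'_mem S hSne)
    rw [← he] at hem
    have hec' : e ≤ c' := Finset.min'_le _ _ (Finset.mem_filter.mpr ⟨hc', hcc', by omega⟩)
    set T := A.filter (fun x => x < e) with hT
    have hcT : c ∈ T := Finset.mem_filter.mpr ⟨hc, hem.2.1⟩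
    set p := T.max' ⟨c, hcT⟩ with hp
    have hpT : p ∈ T := Finset.max'_mem T ⟨c, hcT⟩
    have hpm := Finset.mem_filter.mp hpT
    have hcp : c ≤ p := Finset.le_max' _ _ hcT
    have hfp : n - 2 * ((A.card : ℤ) - 1) + 1 ≤ p - 2 * N p := by
      rcases hcp.lt_or_eq with h | h
      · by_contra hh
        have := Finset.min'_le S p (Finset.mem_filter.mpr ⟨hpm.1, h, by omega⟩)
        omega
      · rw [← h]; exact hfc
    have hNe : N e = N p + 1 := by
      have : T = insert p (A.filter (fun x => x < p)) := by
        ext y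
        simp only [hT, Finset.mem_insert, Finset.mem_filter]
        constructor
        · rintro ⟨h1, h2⟩
          have := Finset.le_max' T y (Finset.mem_filter.mpr ⟨h1, h2⟩)
          rcases this.lt_or_eq with h | h
          · right; exact ⟨h1, h⟩
          · left; exact h
        · rintro (rfl | ⟨h1, h2⟩)
          · exact hpm
          · exact ⟨h1, by omega⟩
      have h2 := congrArg Finset.card this
      rw [Finset.card_insert_of_notMem (by simp)] at h2
      simp only [hN]
      rw [← hT, h2]
      push_cast; ring
    have := hno' e hem.1 (by omega) (by omega)
    omega
  set D1 := A.filter (fun c => c = 0 ∨ (c < n ∧ c ≤ 2 * N c - 1)) with hD1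
  set D2 := A.filter (fun c => ¬ (c = 0 ∨ (c < n ∧ c ≤ 2 * N c - 1))) with hD2
  have hcard : D1.card + D2.card = A.card := Finset.card_filter_add_card_filter_not _
  have hD1m : ∀ c ∈ D1, c ∈ A ∧ (c = 0 ∨ (c < n ∧ c ≤ 2 * N c - 1)) := fun c hc =>
    Finset.mem_filter.mp hc
  have hD2m : ∀ c ∈ D2, c ∈ A ∧ 0 < c ∧ n - 2 * ((A.card : ℤ) - 1) + 1 ≤ c - 2 * N c ∨ c = n := by
    intro c hc
    have h := Finset.mem_filter.mp hc
    have h1 := hpos c h.1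
    have h2 := hmax c h.1
    have h3 := hno' c h.1
    have h4 := h.2
    by_cases hcn : c = n
    · right; exact hcn
    · left; refine ⟨h.1, by omega, by omega⟩
  have h0D : 0 ∈ D1 := Finset.mem_filter.mpr ⟨h0, Or.inl rfl⟩
  have hnD : n ∈ D2 := Finset.mem_filter.mpr ⟨hn, by omega⟩
  have hlt : ∀ c ∈ D1, ∀ c' ∈ D2, c < c' := by
    intro c hc c' hc'
    by_contra hh
    have a1 := hD1m c hc
    have a2 := hD2m c' hc'
    have a3 := Finset.mem_filter.mp hc'
    have a4 := hpos c' a3.1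
    have a5 : c ≠ c' := by
      rintro rfl
      exact a3.2 a1.2
    rcases a2 with a2 | a2
    · have := hdesc c' a2.1 a2.2.1 a2.2.2 c a1.1 (by omega) (by omega)
      omega
    · omega
  have hc1 : 0 < D1.card := Finset.card_pos.mpr ⟨_, h0D⟩
  have hc2 : 0 < D2.card := Finset.card_pos.mpr ⟨_, hnD⟩
  have hmem : ∀ y ∈ A, y ∈ D1 ∨ y ∈ D2 := by
    intro y hy
    by_cases h : (y = 0 ∨ (y < n ∧ y ≤ 2 * N y - 1))
    · left; exact Finset.mem_filter.mpr ⟨hy, h⟩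
    · right; exact Finset.mem_filter.mpr ⟨hy, h⟩
  have hN1 : ∀ c ∈ D1, D1.filter (fun x => x < c) = A.filter (fun x => x < c) := by
    intro c hc
    ext y
    simp only [Finset.mem_filter]
    constructor
    · rintro ⟨h1, h2⟩
      exact ⟨(hD1m y h1).1, h2⟩
    · rintro ⟨h1, h2⟩
      refine ⟨?_, h2⟩
      rcases hmem y h1 with h | h
      · exact h
      · have := hlt c hc y h
        omega
  have cov1 : Finset.Icc 0 (2 * (D1.card : ℤ) - 2) ⊆ A + A := by
    intro x hx
    rw [Finset.mem_Icc] at hx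
    have := initial_cover D1 h0D (fun a ha => hpos a (hD1m a ha).1) (by
      intro c hc hc0
      rw [hN1 c hc]
      have := (hD1m c hc).2
      simp only [hN] at this
      omega) x hx.1 hx.2
    exact Finset.add_subset_add (Finset.filter_subset _ _) (Finset.filter_subset _ _) this
  set E := D2.image (fun c => n - c) with hE
  have hEc : E.card = D2.card :=
    Finset.card_image_of_injective _ (fun a b h => by simpa using h)
  have cov2 : Finset.Icc (2 * n - (2 * (D2.card : ℤ) - 2)) (2 * n) ⊆ A + A := by
    intro x hx
    rw [Finset.mem_Icc] at hx
    have := initial_cover E (Finset.mem_image.mpr ⟨n, hnD, by omega⟩) (by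
      intro a ha
      obtain ⟨b, hb, rfl⟩ := Finset.mem_image.mp ha
      have := hmax b (Finset.mem_filter.mp hb).1
      omega) (by
      intro a ha ha0
      obtain ⟨b, hb, rfl⟩ := Finset.mem_image.mp ha
      have hbA := (Finset.mem_filter.mp hb).1
      have h1 : E.filter (fun x => x < n - b) = (A.filter (fun x => b < x)).image (fun c => n - c) := by
        ext y
        simp only [hE, Finset.mem_filter, Finset.mem_image]
        constructor
        · rintro ⟨⟨z, hz, rfl⟩, h⟩
          exact ⟨z, ⟨(Finset.mem_filter.mp hz).1, by omega⟩, rfl⟩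
        · rintro ⟨z, ⟨hz, hz'⟩, rfl⟩
          refine ⟨⟨z, ?_, rfl⟩, by omega⟩
          rcases hmem z hz with h | h
          · have := hlt z h b hb
            omega
          · exact h
      rw [h1, Finset.card_image_of_injective _ (fun a b h => by simpa using h)]
      have h2 : (A.filter (fun x => x < b)).card + 1 + (A.filter (fun x => b < x)).card = A.card := by
        have e1 := Finset.card_filter_add_card_filter_not (s := A) (fun x => x < b)
        have e2 : A.filter (fun x => ¬ x < b) = insert b (A.filter (fun x => b < x)) := by
          ext y
          simp only [Finset.mem_insert, Finset.mem_filter]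
          constructor
          · rintro ⟨h1, h2⟩
            by_cases hyb : y = b
            · left; exact hyb
            · right; exact ⟨h1, by omega⟩
          · rintro (rfl | ⟨h1, h2⟩)
            · exact ⟨hbA, by omega⟩
            · exact ⟨h1, by omega⟩
        rw [e2, Finset.card_insert_of_notMem (by simp)] at e1
        omega
      have h3 := hD2m b hb
      simp only [hN] at h3
      omega) (2 * n - x) (by omega) (by omega)
    rw [Finset.mem_add] at this
    obtain ⟨u, hu, v, hv, huv⟩ := this
    obtain ⟨u', hu', rfl⟩ := Finset.mem_image.mp hu
    obtain ⟨v', hv', rfl⟩ := Finset.mem_image.mp hv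
    have : x = u' + v' := by omega
    rw [this]
    exact Finset.add_mem_add (Finset.mem_filter.mp hu').1 (Finset.mem_filter.mp hv').1
  have cov3 : D1 + D2 ⊆ A + A :=
    Finset.add_subset_add (Finset.filter_subset _ _) (Finset.filter_subset _ _)
  have hlow : ∀ x ∈ D1 + D2, 2 * (D1.card : ℤ) - 2 < x := by
    intro x hx
    obtain ⟨u, hu, v, hv, rfl⟩ := Finset.mem_add.mp hx
    have h1 := hpos u (hD1m u hu).1
    have h2 : (D1.card : ℤ) ≤ N v := by
      simp only [hN]
      have : D1 ⊆ A.filter (fun x => x < v) := by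
        intro y hy
        exact Finset.mem_filter.mpr ⟨(hD1m y hy).1, hlt y hy v hv⟩
      exact_mod_cast Finset.card_le_card this
    have h3 := hD2m v hv
    omega
  have hhigh : ∀ x ∈ D1 + D2, x < 2 * n - (2 * (D2.card : ℤ) - 2) := by
    intro x hx
    obtain ⟨u, hu, v, hv, rfl⟩ := Finset.mem_add.mp hx
    have h1 := hmax v (Finset.mem_filter.mp hv).1
    have h2 : N u + 1 ≤ (D1.card : ℤ) := by
      simp only [hN]
      rw [← hN1 u hu]
      have : D1.filter (fun x => x < u) ⊂ D1 := by
        rw [Finset.filter_ssubset]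
        exact ⟨u, hu, by omega⟩
      exact_mod_cast Finset.card_lt_card this
    have h3 := (hD1m u hu).2
    omega
  have hc := Finset.card_le_card (Finset.union_subset (Finset.union_subset cov1 cov3) cov2)
  have hx := two_sets D1 D2 ⟨_, h0D⟩ ⟨_, hnD⟩
  rw [Finset.card_union_of_disjoint, Finset.card_union_of_disjoint, Int.card_Icc, Int.card_Icc] at hc
  · omega
  · rw [Finset.disjoint_left]
    intro x h1 h2
    have := hlow x h2
    rw [Finset.mem_Icc] at h1
    omega
  · rw [Finset.disjoint_left]
    intro x h1 h2
    rw [Finset.mem_Icc] at h2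
    rw [Finset.mem_union, Finset.mem_Icc] at h1
    rcases h1 with h1 | h1
    · omega
    · have := hhigh x h1
      omega

/-- No common divisor except units. -/
def GcdOne (A : Finset ℤ) : Prop := ∀ d : ℤ, (∀ a ∈ A, d ∣ a) → d ∣ 1

lemma card_reflect (A : Finset ℤ) (c : ℤ) :
    (A.image (fun a => c - a) + A.image (fun a => c - a)).card = (A + A).card := by
  have : A.image (fun a => c - a) + A.image (fun a => c - a) = (A + A).image (fun a => 2 * c - a) := by
    ext y
    simp only [Finset.mem_add, Finset.mem_image]
    constructor
    · rintro ⟨_, ⟨a, ha, rfl⟩, _, ⟨b, hb, rfl⟩, rfl⟩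
      exact ⟨a + b, ⟨a, ha, b, hb, rfl⟩, by ring⟩
    · rintro ⟨_, ⟨a, ha, b, hb, rfl⟩, rfl⟩
      exact ⟨c - a, ⟨a, ha, rfl⟩, c - b, ⟨b, hb, rfl⟩, by ring⟩
  rw [this, Finset.card_image_of_injective _ (fun a b h => by simpa using h)]

lemma card_shift (A : Finset ℤ) (c : ℤ) :
    (A.image (fun a => a - c) + A.image (fun a => a - c)).card = (A + A).card := by
  have h1 := card_reflect (A.image (fun a => c - a)) 0
  rw [card_reflect A c] at h1
  rw [← h1]
  have : (A.image (fun a => c - a)).image (fun a => 0 - a) = A.image (fun a => a - c) := by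
    rw [Finset.image_image]
    congr 1
    funext a
    simp
  rw [this]

/-- The sums of the two halves, plus extra new elements. -/
lemma split_base (X Y W B : Finset ℤ) (hX : ∀ x ∈ X, 0 ≤ x)
    (hY : ∀ y ∈ Y, 0 ≤ y) (hXB : ∀ x ∈ X, -x ∈ B) (hYB : ∀ y ∈ Y, y ∈ B)
    (hW : W ⊆ B + B) (hWY : ∀ w ∈ W, w ∉ Y + Y) (hWX : ∀ w ∈ W, -w ∉ X + X) :
    ((X + X).card : ℤ) + (Y + Y).card - 1 + W.card ≤ ((B + B).card : ℤ) := by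
  set X' := (X + X).image (fun x => -x) with hX'
  have hc : X'.card = (X + X).card :=
    Finset.card_image_of_injective _ neg_injective
  have hsub1 : X' ⊆ B + B := by
    intro z hz
    obtain ⟨s, hs, rfl⟩ := Finset.mem_image.mp hz
    obtain ⟨u, hu, v, hv, rfl⟩ := Finset.mem_add.mp hs
    have := Finset.add_mem_add (hXB u hu) (hXB v hv)
    have e : -(u + v) = -u + -v := by ring
    simpa only [e] using this
  have hsub2 : Y + Y ⊆ B + B := Finset.add_subset_add hYB hYB
  have hint : X' ∩ (Y + Y) ⊆ {0} := by
    intro z hz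
    rw [Finset.mem_inter] at hz
    obtain ⟨s, hs, rfl⟩ := Finset.mem_image.mp hz.1
    obtain ⟨u, hu, v, hv, rfl⟩ := Finset.mem_add.mp hs
    obtain ⟨u', hu', v', hv', h⟩ := Finset.mem_add.mp hz.2
    have := hX u hu
    have := hX v hv
    have := hY u' hu'
    have := hY v' hv'
    simp only [Finset.mem_singleton]
    omega
  have h1 := Finset.card_le_card hint
  have h2 := Finset.card_union_add_card_inter X' (Y + Y)
  have h3 := Finset.card_le_card (Finset.union_subset (Finset.union_subset hsub1 hsub2) hW)
  rw [Finset.card_union_of_disjoint] at h3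
  · simp at h1
    omega
  · rw [Finset.disjoint_left]
    intro z hz hzW
    rw [Finset.mem_union] at hz
    rcases hz with hz | hz
    · obtain ⟨s, hs, rfl⟩ := Finset.mem_image.mp hz
      apply hWX _ hzW
      simpa using hs
    · exact hWY _ hzW hz

/-- Overlapping split. -/
lemma split_overlap (Z Y B : Finset ℤ) (hZ : ∀ x ∈ Z, x ≤ 1) (hY : ∀ y ∈ Y, 0 ≤ y)
    (hZB : Z ⊆ B) (hYB : Y ⊆ B) :
    ((Z + Z).card : ℤ) + (Y + Y).card - 3 ≤ ((B + B).card : ℤ) := by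
  have hint : (Z + Z) ∩ (Y + Y) ⊆ Finset.Icc 0 2 := by
    intro z hz
    rw [Finset.mem_inter] at hz
    obtain ⟨u, hu, v, hv, rfl⟩ := Finset.mem_add.mp hz.1
    obtain ⟨u', hu', v', hv', h⟩ := Finset.mem_add.mp hz.2
    have := hZ u hu
    have := hZ v hv
    have := hY u' hu'
    have := hY v' hv'
    rw [Finset.mem_Icc]
    omega
  have h1 := Finset.card_le_card hint
  have h2 := Finset.card_union_add_card_inter (Z + Z) (Y + Y)
  have h3 := Finset.card_le_card (Finset.union_subset (Finset.add_subset_add hZB hZB)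
    (Finset.add_subset_add hYB hYB))
  rw [Int.card_Icc] at h1
  omega

/-- Minimal non-multiple, with the properties of its family of new differences. -/
lemma new_family (X Y : Finset ℤ) (hX : ∀ x ∈ X, 0 ≤ x) (hY : ∀ y ∈ Y, 0 ≤ y) (d : ℤ)
    (hd : ∀ x ∈ X, d ∣ x) (hne : ∃ y ∈ Y, ¬ d ∣ y) :
    ∃ y0 ∈ Y, ¬ d ∣ y0 ∧ (∀ y ∈ Y, ¬ d ∣ y → y0 ≤ y) ∧
      ∀ x ∈ X.erase 0, y0 - x ∉ Y + Y ∧ -(y0 - x) ∉ X + X := by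
  set S := Y.filter (fun y => ¬ d ∣ y) with hS
  obtain ⟨y, hy, hyd⟩ := hne
  have hSne : S.Nonempty := ⟨y, Finset.mem_filter.mpr ⟨hy, hyd⟩⟩
  have hm := Finset.mem_filter.mp (Finset.min'_mem S hSne)
  have hmin : ∀ y ∈ Y, ¬ d ∣ y → S.min' hSne ≤ y := fun y hy hyd =>
    Finset.min'_le _ _ (Finset.mem_filter.mpr ⟨hy, hyd⟩)
  refine ⟨S.min' hSne, hm.1, hm.2, hmin, ?_⟩
  intro x hx
  have hxX := Finset.mem_of_mem_erase hx
  have hx0 := Finset.ne_of_mem_erase hx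
  have := hX x hxX
  have hdx := hd x hxX
  constructor
  · intro h
    obtain ⟨u, hu, v, hv, huv⟩ := Finset.mem_add.mp h
    have := hY u hu
    have := hY v hv
    have hu' : d ∣ u := by
      by_contra hh
      have := hmin u hu hh
      omega
    have hv' : d ∣ v := by
      by_contra hh
      have := hmin v hv hh
      omega
    apply hm.2
    have : S.min' hSne = u + v + x := by omega
    rw [this]
    exact dvd_add (dvd_add hu' hv') hdx
  · intro h
    obtain ⟨u, hu, v, hv, huv⟩ := Finset.mem_add.mp h
    apply hm.2
    have : S.min' hSne = x - (u + v) := by omega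
    rw [this]
    exact dvd_sub hdx (dvd_add (hd u hu) (hd v hv))

lemma half_case (X Y B : Finset ℤ) (hX0 : 0 ∈ X) (hX : ∀ x ∈ X, 0 ≤ x)
    (hY : ∀ y ∈ Y, 0 ≤ y) (hXB : ∀ x ∈ X, -x ∈ B) (hYB : ∀ y ∈ Y, y ∈ B) (d : ℤ)
    (hd : ∀ x ∈ X, d ∣ x) (hne : ∃ y ∈ Y, ¬ d ∣ y)
    (h3 : 3 * (Y.card : ℤ) - 3 ≤ ((Y + Y).card : ℤ)) :
    3 * ((X.card : ℤ) + Y.card) - 6 ≤ ((B + B).card : ℤ) := by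
  obtain ⟨y0, hy0, -, -, hnew⟩ := new_family X Y hX hY d hd hne
  have := split_base X Y ((X.erase 0).image (fun x => y0 - x)) B hX hY hXB hYB (by
    intro w hw
    obtain ⟨x, hx, rfl⟩ := Finset.mem_image.mp hw
    have := Finset.add_mem_add (hYB y0 hy0) (hXB x (Finset.mem_of_mem_erase hx))
    simpa [sub_eq_add_neg] using this) (by
    intro w hw
    obtain ⟨x, hx, rfl⟩ := Finset.mem_image.mp hw
    exact (hnew x hx).1) (by
    intro w hw
    obtain ⟨x, hx, rfl⟩ := Finset.mem_image.mp hw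
    exact (hnew x hx).2)
  rw [Finset.card_image_of_injective _ (fun a b h => by simpa using h),
    Finset.card_erase_of_mem hX0] at this
  have hp : 0 < X.card := Finset.card_pos.mpr ⟨_, hX0⟩
  have := two_sets X X ⟨_, hX0⟩ ⟨_, hX0⟩
  omega

lemma both_case (X Y B : Finset ℤ) (hX0 : 0 ∈ X) (hY0 : 0 ∈ Y) (hX : ∀ x ∈ X, 0 ≤ x)
    (hY : ∀ y ∈ Y, 0 ≤ y) (hXB : ∀ x ∈ X, -x ∈ B) (hYB : ∀ y ∈ Y, y ∈ B) (d e : ℤ)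
    (hd : ∀ x ∈ X, d ∣ x) (hne : ∃ y ∈ Y, ¬ d ∣ y)
    (he : ∀ y ∈ Y, e ∣ y) (hne' : ∃ x ∈ X, ¬ e ∣ x) :
    3 * ((X.card : ℤ) + Y.card) - 6 ≤ ((B + B).card : ℤ) := by
  obtain ⟨y0, hy0, hy0d, hymin, hnew⟩ := new_family X Y hX hY d hd hne
  obtain ⟨x0, hx0, hx0e, hxmin, hnew'⟩ := new_family Y X hY hX e he hne'
  set W1 := (X.erase 0).image (fun x => y0 - x) with hW1
  set W2 := (Y.erase 0).image (fun y => y - x0) with hW2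
  have hint : W1 ∩ W2 ⊆ {y0 - x0} := by
    intro w hw
    rw [Finset.mem_inter] at hw
    obtain ⟨x, hx, rfl⟩ := Finset.mem_image.mp hw.1
    obtain ⟨y, hy, hxy⟩ := Finset.mem_image.mp hw.2
    have hxX := Finset.mem_of_mem_erase hx
    have hyY := Finset.mem_of_mem_erase hy
    have h1 : y0 ≤ y := by
      apply hymin y hyY
      intro h
      apply hy0d
      have : y0 = y - x0 + x := by omega
      rw [this]
      exact dvd_add (dvd_sub h (hd _ hx0)) (hd _ hxX)
    have h2 : x0 ≤ x := by
      apply hxmin x hxX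
      intro h
      apply hx0e
      have : x0 = y - y0 + x := by omega
      rw [this]
      exact dvd_add (dvd_sub (he _ hyY) (he _ hy0)) h
    rw [Finset.mem_singleton]
    omega
  have := split_base X Y (W1 ∪ W2) B hX hY hXB hYB (by
    intro w hw
    rw [Finset.mem_union] at hw
    rcases hw with hw | hw
    · obtain ⟨x, hx, rfl⟩ := Finset.mem_image.mp hw
      have := Finset.add_mem_add (hYB y0 hy0) (hXB x (Finset.mem_of_mem_erase hx))
      simpa [sub_eq_add_neg] using this
    · obtain ⟨x, hx, rfl⟩ := Finset.mem_image.mp hw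
      have := Finset.add_mem_add (hYB x (Finset.mem_of_mem_erase hx)) (hXB x0 hx0)
      simpa [sub_eq_add_neg] using this) (by
    intro w hw
    rw [Finset.mem_union] at hw
    rcases hw with hw | hw
    · obtain ⟨x, hx, rfl⟩ := Finset.mem_image.mp hw
      exact (hnew x hx).1
    · obtain ⟨x, hx, rfl⟩ := Finset.mem_image.mp hw
      have := (hnew' x hx).2
      rwa [neg_sub] at this) (by
    intro w hw
    rw [Finset.mem_union] at hw
    rcases hw with hw | hw
    · obtain ⟨x, hx, rfl⟩ := Finset.mem_image.mp hw
      exact (hnew x hx).2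
    · obtain ⟨x, hx, rfl⟩ := Finset.mem_image.mp hw
      have := (hnew' x hx).1
      rwa [neg_sub])
  have h1 := Finset.card_le_card hint
  have h2 := Finset.card_union_add_card_inter W1 W2
  have c1 : W1.card = X.card - 1 := by
    rw [hW1, Finset.card_image_of_injective _ (fun a b h => by simpa using h),
      Finset.card_erase_of_mem hX0]
  have c2 : W2.card = Y.card - 1 := by
    rw [hW2, Finset.card_image_of_injective _ (fun a b h => by simpa using h),
      Finset.card_erase_of_mem hY0]
  have hp : 0 < X.card := Finset.card_pos.mpr ⟨_, hX0⟩
  have hp' : 0 < Y.card := Finset.card_pos.mpr ⟨_, hY0⟩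
  have := two_sets X X ⟨_, hX0⟩ ⟨_, hX0⟩
  have := two_sets Y Y ⟨_, hY0⟩ ⟨_, hY0⟩
  rw [Finset.card_singleton] at h1
  omega

lemma no_new (X Y : Finset ℤ) (hX : ∀ x ∈ X, 0 ≤ x) (hY : ∀ y ∈ Y, 0 ≤ y)
    (hXp : ∃ x ∈ X, 0 < x) (hYp : ∃ y ∈ Y, 0 < y)
    (hG : ∀ d : ℤ, (∀ x ∈ X, d ∣ x) → (∀ y ∈ Y, d ∣ y) → d ∣ 1)
    (hno : ∀ x ∈ X, ∀ y ∈ Y, y - x ∈ Y + Y ∨ -(y - x) ∈ X + X) : 1 ∈ Y := by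
  have minex : ∀ Z : Finset ℤ, (∃ z ∈ Z, 0 < z) → ∃ m ∈ Z, 0 < m ∧ ∀ z ∈ Z, 0 < z → m ≤ z := by
    rintro Z ⟨z, hz, hz0⟩
    have hne : (Z.filter (fun z => 0 < z)).Nonempty := ⟨z, Finset.mem_filter.mpr ⟨hz, hz0⟩⟩
    have hm := Finset.mem_filter.mp (Finset.min'_mem _ hne)
    exact ⟨_, hm.1, hm.2, fun w hw hw0 =>
      Finset.min'_le _ _ (Finset.mem_filter.mpr ⟨hw, hw0⟩)⟩
  obtain ⟨d, hdX, hd0, hdmin⟩ := minex X hXp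
  obtain ⟨e, heY, he0, hemin⟩ := minex Y hYp
  have hde : e = d := by
    rcases hno d hdX e heY with h | h
    · obtain ⟨u, hu, v, hv, huv⟩ := Finset.mem_add.mp h
      have := hY u hu
      have := hY v hv
      have := hemin u hu
      have := hemin v hv
      omega
    · obtain ⟨u, hu, v, hv, huv⟩ := Finset.mem_add.mp h
      have := hX u hu
      have := hX v hv
      have := hdmin u hu
      have := hdmin v hv
      omega
  subst hde
  have key : ∀ n : ℕ, ∀ z : ℤ, z.toNat = n → ((z ∈ X → e ∣ z) ∧ (z ∈ Y → e ∣ z)) := by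
    intro n
    induction n using Nat.strong_induction_on with
    | _ n ih =>
      intro z hz
      constructor
      · intro hzX
        have h0 := hX z hzX
        rcases h0.lt_or_eq with h0 | h0
        · have h1 := hdmin z hzX h0
          rcases h1.lt_or_eq with h1 | h1
          · rcases hno z hzX e heY with h | h
            · obtain ⟨u, hu, v, hv, huv⟩ := Finset.mem_add.mp h
              have := hY u hu
              have := hY v hv
              omega
            · obtain ⟨u, hu, v, hv, huv⟩ := Finset.mem_add.mp h
              have := hX u hu
              have := hX v hv
              have a1 := (ih u.toNat (by omega) u rfl).1 hu
              have a2 := (ih v.toNat (by omega) v rfl).1 hv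
              have : z = u + v + e := by omega
              rw [this]
              exact dvd_add (dvd_add a1 a2) dvd_rfl
          · rw [h1]
        · rw [← h0]; exact dvd_zero _
      · intro hzY
        have h0 := hY z hzY
        rcases h0.lt_or_eq with h0 | h0
        · have h1 := hemin z hzY h0
          rcases h1.lt_or_eq with h1 | h1
          · rcases hno e hdX z hzY with h | h
            · obtain ⟨u, hu, v, hv, huv⟩ := Finset.mem_add.mp h
              have := hY u hu
              have := hY v hv
              have a1 := (ih u.toNat (by omega) u rfl).2 hu
              have a2 := (ih v.toNat (by omega) v rfl).2 hv
              have : z = u + v + e := by omega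
              rw [this]
              exact dvd_add (dvd_add a1 a2) dvd_rfl
            · obtain ⟨u, hu, v, hv, huv⟩ := Finset.mem_add.mp h
              have := hX u hu
              have := hX v hv
              omega
          · rw [h1]
        · rw [← h0]; exact dvd_zero _
  have h1 := hG e (fun x hx => (key _ x rfl).1 hx) (fun y hy => (key _ y rfl).2 hy)
  have h2 := Int.le_of_dvd one_pos h1
  have : e = 1 := by omega
  rwa [← this]

lemma split_main (X Y B : Finset ℤ) (hX0 : 0 ∈ X) (hY0 : 0 ∈ Y) (hX : ∀ x ∈ X, 0 ≤ x)
    (hY : ∀ y ∈ Y, 0 ≤ y) (hXp : ∃ x ∈ X, 0 < x) (hYp : ∃ y ∈ Y, 0 < y)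
    (hXB : ∀ x ∈ X, -x ∈ B) (hYB : ∀ y ∈ Y, y ∈ B)
    (hG : ∀ d : ℤ, (∀ x ∈ X, d ∣ x) → (∀ y ∈ Y, d ∣ y) → d ∣ 1)
    (iX : GcdOne X → 3 * (X.card : ℤ) - 3 ≤ ((X + X).card : ℤ))
    (iY : GcdOne Y → 3 * (Y.card : ℤ) - 3 ≤ ((Y + Y).card : ℤ))
    (i1 : 1 ∈ Y → 3 * ((X.card : ℤ) + Y.card) - 6 ≤ ((B + B).card : ℤ)) :
    3 * ((X.card : ℤ) + Y.card) - 6 ≤ ((B + B).card : ℤ) := by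
  by_cases gX : GcdOne X
  · by_cases gY : GcdOne Y
    · by_cases hno : ∀ x ∈ X, ∀ y ∈ Y, y - x ∈ Y + Y ∨ -(y - x) ∈ X + X
      · exact i1 (no_new X Y hX hY hXp hYp hG hno)
      · push Not at hno
        obtain ⟨x, hx, y, hy, h1, h2⟩ := hno
        have := split_base X Y {y - x} B hX hY hXB hYB (by
          rw [Finset.singleton_subset_iff, sub_eq_add_neg]
          exact Finset.add_mem_add (hYB y hy) (hXB x hx)) (by
          intro w hw
          rw [Finset.mem_singleton] at hw
          rw [hw]; exact h1) (by
          intro w hw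
          rw [Finset.mem_singleton] at hw
          rw [hw]; exact h2)
        have := iX gX
        have := iY gY
        simp only [Finset.card_singleton] at *
        omega
    · unfold GcdOne at gY
      push Not at gY
      obtain ⟨d, hd, hd1⟩ := gY
      have hne : ∃ x ∈ X, ¬ d ∣ x := by
        by_contra hh
        push Not at hh
        exact hd1 (hG d hh hd)
      have := half_case Y X (B.image (fun b => 0 - b)) hY0 hY hX
        (fun y hy => Finset.mem_image.mpr ⟨y, hYB y hy, by simp⟩)
        (fun x hx => Finset.mem_image.mpr ⟨-x, hXB x hx, by simp⟩) d hd hne (iX gX)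
      rw [card_reflect] at this
      omega
  · unfold GcdOne at gX
    push Not at gX
    obtain ⟨d, hd, hd1⟩ := gX
    have hne : ∃ y ∈ Y, ¬ d ∣ y := by
      by_contra hh
      push Not at hh
      exact hd1 (hG d hd hh)
    by_cases gY : GcdOne Y
    · exact half_case X Y B hX0 hX hY hXB hYB d hd hne (iY gY)
    · unfold GcdOne at gY
      push Not at gY
      obtain ⟨e, he, he1⟩ := gY
      have hne' : ∃ x ∈ X, ¬ e ∣ x := by
        by_contra hh
        push Not at hh
        exact he1 (hG e hh he)
      exact both_case X Y B hX0 hY0 hX hY hXB hYB d e hd hne he hne'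

theorem freiman_aux (k : ℕ) : ∀ (A : Finset ℤ) (n : ℤ), A.card = k → 0 ∈ A → (∀ a ∈ A, 0 ≤ a) →
    n ∈ A → (∀ a ∈ A, a ≤ n) → GcdOne A → 2 * (A.card : ℤ) - 3 ≤ n →
    3 * (A.card : ℤ) - 3 ≤ ((A + A).card : ℤ) := by
  induction k using Nat.strong_induction_on with
  | _ k ih =>
    intro A n hk h0 hpos hn hmax hG hd
    have hcpos : 0 < A.card := Finset.card_pos.mpr ⟨_, h0⟩
    by_cases hdense : n ≤ 2 * (A.card : ℤ) - 3
    · have := dense_case A n h0 hpos hn hmax hdense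
      omega
    have hn0 : 0 < n := by
      rcases (hpos n hn).lt_or_eq with h | h
      · exact h
      · exfalso
        have := hG 0 (by
          intro a ha
          have := hpos a ha
          have := hmax a ha
          have : a = 0 := by omega
          rw [this])
        norm_num at this
    by_cases hno : ∀ c ∈ A, 0 < c → c < n →
      ¬ (0 ≤ c - 2 * ((A.filter (fun x => x < c)).card : ℤ) ∧
        c - 2 * ((A.filter (fun x => x < c)).card : ℤ) ≤ n - 2 * ((A.card : ℤ) - 1))
    · exact jump_case A n h0 hpos hn hmax (by omega) hn0 hno
    push Not at hno
    obtain ⟨c, hc, hc0, hcn, hf0, hfg⟩ := hno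
    set N := (A.filter (fun x => x < c)).card with hN
    set X := (A.filter (fun x => x ≤ c)).image (fun x => c - x) with hXdef
    set Y := (A.filter (fun x => ¬ x < c)).image (fun x => x - c) with hYdef
    set B := A.image (fun x => x - c) with hB
    have hBc : (B + B).card = (A + A).card := card_shift A c
    have mX : ∀ x, x ∈ X ↔ (c - x ∈ A ∧ 0 ≤ x) := by
      intro x
      simp only [hXdef, Finset.mem_image, Finset.mem_filter]
      constructor
      · rintro ⟨a, ⟨h1, h2⟩, rfl⟩
        exact ⟨by simpa using h1, by omega⟩
      · rintro ⟨h1, h2⟩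
        exact ⟨c - x, ⟨h1, by omega⟩, by omega⟩
    have mY : ∀ y, y ∈ Y ↔ (y + c ∈ A ∧ 0 ≤ y) := by
      intro y
      simp only [hYdef, Finset.mem_image, Finset.mem_filter]
      constructor
      · rintro ⟨a, ⟨h1, h2⟩, rfl⟩
        exact ⟨by simpa using h1, by omega⟩
      · rintro ⟨h1, h2⟩
        exact ⟨y + c, ⟨h1, by omega⟩, by omega⟩
    have mB : ∀ y, y ∈ B ↔ y + c ∈ A := by
      intro y
      simp only [hB, Finset.mem_image]
      constructor
      · rintro ⟨a, h1, rfl⟩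
        simpa using h1
      · intro h1
        exact ⟨y + c, h1, by omega⟩
    have cX : X.card = N + 1 := by
      rw [hXdef, Finset.card_image_of_injective _ (fun a b h => by simpa using h)]
      have : A.filter (fun x => x ≤ c) = insert c (A.filter (fun x => x < c)) := by
        ext y
        simp only [Finset.mem_insert, Finset.mem_filter]
        constructor
        · rintro ⟨h1, h2⟩
          by_cases hyb : y = c
          · left; exact hyb
          · right; exact ⟨h1, by omega⟩
        · rintro (rfl | ⟨h1, h2⟩)
          · exact ⟨hc, by omega⟩
          · exact ⟨h1, by omega⟩
      rw [this, Finset.card_insert_of_notMem (by simp)]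
    have cY : Y.card + N = A.card := by
      rw [hYdef, Finset.card_image_of_injective _ (fun a b h => by simpa using h), hN, add_comm]
      exact Finset.card_filter_add_card_filter_not _
    have hX0 : 0 ∈ X := (mX 0).mpr ⟨by simpa using hc, le_rfl⟩
    have hY0 : 0 ∈ Y := (mY 0).mpr ⟨by simpa using hc, le_rfl⟩
    have hcX : c ∈ X := (mX c).mpr ⟨by simpa using h0, hc0.le⟩
    have hnY : n - c ∈ Y := (mY _).mpr ⟨by simpa using hn, by omega⟩
    have hX : ∀ x ∈ X, 0 ≤ x := fun x hx => ((mX x).mp hx).2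
    have hY : ∀ x ∈ Y, 0 ≤ x := fun x hx => ((mY x).mp hx).2
    have hXm : ∀ x ∈ X, x ≤ c := fun x hx => by
      have := hpos _ ((mX x).mp hx).1
      omega
    have hYm : ∀ x ∈ Y, x ≤ n - c := fun x hx => by
      have := hmax _ ((mY x).mp hx).1
      omega
    have hNpos : 0 < N := Finset.card_pos.mpr ⟨0, Finset.mem_filter.mpr ⟨h0, hc0⟩⟩
    have hY2 : 2 ≤ Y.card := by
      have : ({0, n - c} : Finset ℤ) ⊆ Y := by
        intro z hz
        simp only [Finset.mem_insert, Finset.mem_singleton] at hz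
        rcases hz with rfl | rfl
        · exact hY0
        · exact hnY
      have h := Finset.card_le_card this
      rwa [Finset.card_pair (by omega)] at h
    have iY : GcdOne Y → 3 * (Y.card : ℤ) - 3 ≤ ((Y + Y).card : ℤ) := fun g =>
      ih Y.card (by omega) Y (n - c) rfl hY0 hY hnY hYm g (by omega)
    have hYB : ∀ y ∈ Y, y ∈ B := fun y hy => (mB y).mpr ((mY y).mp hy).1
    have hXB : ∀ x ∈ X, -x ∈ B := fun x hx => (mB _).mpr (by
      have := ((mX x).mp hx).1
      rwa [neg_add_eq_sub])
    have := split_main X Y B hX0 hY0 hX hY ⟨c, hcX, hc0⟩ ⟨n - c, hnY, by omega⟩ hXB hYB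
      (by
        intro d h1 h2
        apply hG
        have hdc := h1 c hcX
        intro a ha
        by_cases hac : a ≤ c
        · have := h1 (c - a) ((mX _).mpr ⟨by simpa using ha, by omega⟩)
          exact (dvd_sub_right hdc).mp this
        · have := h2 (a - c) ((mY _).mpr ⟨by simpa using ha, by omega⟩)
          exact (dvd_sub_left hdc).mp this)
      (fun g => ih X.card (by omega) X c rfl hX0 hX hcX hXm g (by omega)) iY
      (by
        intro h1Y
        set Z := insert 1 (X.image (fun x => -x)) with hZ
        set X1 := Z.image (fun z => 1 - z) with hX1
        have cZ : Z.card = N + 2 := by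
          rw [hZ, Finset.card_insert_of_notMem, Finset.card_image_of_injective _ neg_injective, cX]
          intro h
          obtain ⟨x, hx, hx'⟩ := Finset.mem_image.mp h
          have := hX x hx
          omega
        have cX1 : X1.card = N + 2 := by
          rw [hX1, Finset.card_image_of_injective _ (fun a b h => by simpa using h), cZ]
        have mZ : ∀ z ∈ Z, -c ≤ z ∧ z ≤ 1 := by
          intro z hz
          rw [hZ, Finset.mem_insert, Finset.mem_image] at hz
          rcases hz with rfl | ⟨x, hx, rfl⟩
          · omega
          · have := hX x hx
            have := hXm x hx
            omega
        have hlt : N + 2 < k := by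
          have hn2 : 2 ≤ n - c := by omega
          have : ({0, 1, n - c} : Finset ℤ) ⊆ Y := by
            intro z hz
            simp only [Finset.mem_insert, Finset.mem_singleton] at hz
            rcases hz with rfl | rfl | rfl
            · exact hY0
            · exact h1Y
            · exact hnY
          have h := Finset.card_le_card this
          rw [Finset.card_eq_three.mpr ⟨0, 1, n - c, by omega, by omega, by omega, rfl⟩] at h
          omega
        have hZ0 : (0 : ℤ) ∈ Z := by
          rw [hZ, Finset.mem_insert, Finset.mem_image]
          right; exact ⟨0, hX0, by simp⟩
        have g1 : 3 * (X1.card : ℤ) - 3 ≤ ((X1 + X1).card : ℤ) := by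
          refine ih X1.card (by omega) X1 (c + 1) rfl ?_ ?_ ?_ ?_ ?_ (by omega)
          · exact Finset.mem_image.mpr ⟨1, Finset.mem_insert_self _ _, by simp⟩
          · intro a ha
            obtain ⟨z, hz, rfl⟩ := Finset.mem_image.mp ha
            have := mZ z hz
            omega
          · refine Finset.mem_image.mpr ⟨-c, ?_, by ring⟩
            exact Finset.mem_insert_of_mem (Finset.mem_image.mpr ⟨c, hcX, rfl⟩)
          · intro a ha
            obtain ⟨z, hz, rfl⟩ := Finset.mem_image.mp ha
            have := mZ z hz
            omega
          · intro d hdd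
            exact hdd 1 (Finset.mem_image.mpr ⟨0, hZ0, by simp⟩)
        rw [hX1, card_reflect, ← hX1] at g1
        have g2 := iY (fun d hdd => hdd 1 h1Y)
        have := split_overlap Z Y B (fun z hz => (mZ z hz).2) hY (by
          intro z hz
          rw [hZ, Finset.mem_insert, Finset.mem_image] at hz
          rcases hz with rfl | ⟨x, hx, rfl⟩
          · exact hYB 1 h1Y
          · exact hXB x hx) hYB
        omega)
    omega

theorem doubling_lower_bound (A' : Finset ℤ) (s : ℕ) (hs : 2 ≤ s) (hcard : A'.card = s)
    (h0 : 0 ∈ A') (hpos : ∀ a ∈ A', 0 ≤ a)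
    (aS : ℤ) (haS : aS ∈ A') (haSmax : ∀ a ∈ A', a ≤ aS)
    (hgcd : A'.gcd id = 1) :
    2 * (s : ℤ) + min (aS - s + 3) (s : ℤ) - 3 ≤ ((A' + A').card : ℤ) := by
  by_cases hd : aS ≤ 2 * (A'.card : ℤ) - 3
  · have := dense_case A' aS h0 hpos haS haSmax hd
    have := min_le_left (aS - s + 3) (s : ℤ)
    omega
  · have := freiman_aux A'.card A' aS rfl h0 hpos haS haSmax (by
      intro d hdd
      rw [← hgcd]
      exact Finset.dvd_gcd (fun b hb => hdd b hb)) (by omega)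
    have := min_le_right (aS - s + 3) (s : ℤ)
    omega
end
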